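/- Let H₁ and H₂ be finite-dimensional Hilbert spaces and K an invertible matrix on H₁ ⊗ H₂. Let p, q, r, s be real parameters with 0 < p, q, r ≤ 1, p/(p+q+r) ≤ s, (q+r)/(p+q+r) ≤ s, and s ≤ 1/(p+q+r). For A positive definite on H₁ ⊗ H₂ and B positive definite on H₂, define Q(A,B) := sup_C Tr[(A^{p/2} K (I₁ ⊗ B^{q/2} C^r B^{q/2}) K† A^{p/2})^s], the supremum taken over all density matrices C on H₂. Then Q is jointly concave: for all positive definite A₀, A₁ on H₁ ⊗ H₂, all positive definite B₀, B₁ on H₂, and all t ∈ [0,1], Q(t·A₀+(1−t)·A₁, t·B₀+(1−t)·B₁) ≥ t·Q(A₀,B₀) + (1−t)·Q(A₁,B₁). -/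

import Mathlib

open scoped Kronecker ComplexOrder
open Matrix

/-- Real power of a (Hermitian, in practice positive semidefinite) matrix, defined spectrally:
positive eigenvalues are raised to the power `t`, zero (and negative) eigenvalues are sent to `0`. -/
noncomputable def matPow {n : Type*} [Fintype n] [DecidableEq n]
    (M : Matrix n n ℂ) (t : ℝ) : Matrix n n ℂ :=
  if hM : M.IsHermitian then
    (hM.eigenvectorUnitary : Matrix n n ℂ) *
      Matrix.diagonal (fun i =>
        ((if 0 < hM.eigenvalues i then (hM.eigenvalues i) ^ t else 0 : ℝ) : ℂ)) *
      (star (hM.eigenvectorUnitary : Matrix n n ℂ))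
  else 0

/-- Partial trace over the first tensor factor. -/
noncomputable def ptraceFst {m n : Type*} [Fintype m] [Fintype n]
    (M : Matrix (m × n) (m × n) ℂ) : Matrix n n ℂ :=
  Matrix.of fun j j' => ∑ i, M (i, j) (i, j')

/-- Partial trace over the second tensor factor. -/
noncomputable def ptraceSnd {m n : Type*} [Fintype m] [Fintype n]
    (M : Matrix (m × n) (m × n) ℂ) : Matrix m m ℂ :=
  Matrix.of fun i i' => ∑ j, M (i, j) (i', j)

/-- A density matrix: positive semidefinite with unit trace. -/
def IsDensity {n : Type*} [Fintype n] [DecidableEq n] (ρ : Matrix n n ℂ) : Prop :=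
  ρ.PosSemidef ∧ ρ.trace = 1

/-- The optimized trace functional of Statement 0:
`Q(A,B) = sup_C Tr[(A^{p/2} K (I₁ ⊗ B^{q/2} C^r B^{q/2}) K† A^{p/2})^s]`,
the supremum over all density matrices `C` on `H₂`. -/
noncomputable def Qsup {n₁ n₂ : Type*} [Fintype n₁] [DecidableEq n₁]
    [Fintype n₂] [DecidableEq n₂] (K : Matrix (n₁ × n₂) (n₁ × n₂) ℂ) (p q r s : ℝ)
    (A : Matrix (n₁ × n₂) (n₁ × n₂) ℂ) (B : Matrix n₂ n₂ ℂ) : ℝ :=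
  sSup {x | ∃ C : Matrix n₂ n₂ ℂ, IsDensity C ∧
    x = (Matrix.trace (matPow
      (matPow A (p / 2) * K *
        ((1 : Matrix n₁ n₁ ℂ) ⊗ₖ (matPow B (q / 2) * matPow C r * matPow B (q / 2))) *
        Kᴴ * matPow A (p / 2)) s)).re}

/-!
Young's inequality writes `c⁻¹ Tr X ^ c`, for `c ≥ 1`, as the maximum over `U ≥ 0` of
`Tr X U ^ (1 - c⁻¹) - (1 - c⁻¹) Tr U`. A partial maximum of a jointly concave function is concave,
so Lieb's concavity theorem gives Epstein's: `A ↦ Tr Φ(A ^ p) ^ c` is concave for `Φ` completely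
positive and `p ≤ c⁻¹`. Lieb's theorem comes from an integral representation of `a ^ p b ^ (1 - p)`
by parallel sums.

For `s⁻¹ = a⁻¹ + b⁻¹` with `a, b ≥ 1`, Hölder's inequality gives
`s⁻¹ Tr (X M Xᴴ) ^ s = inf_P [a⁻¹ Tr (X P Xᴴ) ^ a + b⁻¹ Tr (P ^ (-1/2) M P ^ (-1/2)) ^ b]`,
which separates `X = A ^ (p/2) K` from `M = 1 ⊗ B ^ (q/2) C ^ r B ^ (q/2)`. The bracket is convex
in `P` and, by Epstein, concave in `C`, so Sion's minimax theorem exchanges `sup_C` and `inf_P`.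
An infimum of concave functions is concave, which leaves one term in `A` alone, concave by Epstein,
and `sup_C Tr (Ψ(B ^ (q/2) C ^ r B ^ (q/2))) ^ b` with `Ψ` completely positive. In the latter,
Young's inequality introduces `U`, Hölder's inequality maximizes out `C`, and the result is jointly
concave in `(B, U)` by the same separation. The exponents `a = s(p+q+r)/p` and `b = s(p+q+r)/(q+r)`
satisfy all constraints.
-/

section PartialOptimization

variable {E F : Type*} [AddCommGroup E] [Module ℝ E] {S : Set E} {T : Set F} {f : E → ℝ}

lemma concaveOn_of_isGreatest [AddCommGroup F] [Module ℝ F] {g : E × F → ℝ}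
    (hg : ConcaveOn ℝ (S ×ˢ T) g) (hS : Convex ℝ S)
    (hf : ∀ x ∈ S, IsGreatest ((fun y => g (x, y)) '' T) (f x)) : ConcaveOn ℝ S f := by
  refine ⟨hS, fun x₀ hx₀ x₁ hx₁ a b ha hb hab => ?_⟩
  obtain ⟨y₀, hy₀, hfy₀⟩ := (hf x₀ hx₀).1
  obtain ⟨y₁, hy₁, hfy₁⟩ := (hf x₁ hx₁).1
  have hmem : (x₀, y₀) ∈ S ×ˢ T := ⟨hx₀, hy₀⟩
  have hmem' : (x₁, y₁) ∈ S ×ˢ T := ⟨hx₁, hy₁⟩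
  rw [← hfy₀, ← hfy₁]
  exact (hg.2 hmem hmem' ha hb hab).trans
    ((hf _ (hS hx₀ hx₁ ha hb hab)).2 ⟨_, (hg.1 hmem hmem' ha hb hab).2, rfl⟩)

lemma concaveOn_of_isGLB {g : E → F → ℝ} (hg : ∀ y ∈ T, ConcaveOn ℝ S fun x => g x y)
    (hS : Convex ℝ S) (hf : ∀ x ∈ S, IsGLB (g x '' T) (f x)) : ConcaveOn ℝ S f := by
  refine ⟨hS, fun x₀ hx₀ x₁ hx₁ a b ha hb hab => (hf _ (hS hx₀ hx₁ ha hb hab)).2 ?_⟩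
  rintro _ ⟨y, hy, rfl⟩
  refine le_trans ?_ ((hg y hy).2 hx₀ hx₁ ha hb hab)
  have h₀ : f x₀ ≤ g x₀ y := (hf x₀ hx₀).1 ⟨y, hy, rfl⟩
  have h₁ : f x₁ ≤ g x₁ y := (hf x₁ hx₁).1 ⟨y, hy, rfl⟩
  simp only [smul_eq_mul]
  gcongr

lemma convexOn_of_isLUB {g : E → F → ℝ} (hg : ∀ y ∈ T, ConvexOn ℝ S fun x => g x y)
    (hS : Convex ℝ S) (hf : ∀ x ∈ S, IsLUB (g x '' T) (f x)) : ConvexOn ℝ S f := by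
  refine ⟨hS, fun x₀ hx₀ x₁ hx₁ a b ha hb hab => (hf _ (hS hx₀ hx₁ ha hb hab)).2 ?_⟩
  rintro _ ⟨y, hy, rfl⟩
  refine ((hg y hy).2 hx₀ hx₁ ha hb hab).trans ?_
  have h₀ : g x₀ y ≤ f x₀ := (hf x₀ hx₀).1 ⟨y, hy, rfl⟩
  have h₁ : g x₁ y ≤ f x₁ := (hf x₁ hx₁).1 ⟨y, hy, rfl⟩
  simp only [smul_eq_mul]
  gcongr

lemma isGreatest_image_comm {E : Type*} {S : Set E} {h : E → F → ℝ} {φ : E → ℝ} {γ : F → ℝ} {x : ℝ}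
    (hφ : ∀ c ∈ S, IsGreatest (h c '' T) (φ c))
    (hγ : ∀ y ∈ T, IsGreatest ((fun c => h c y) '' S) (γ y)) (hx : IsGreatest (φ '' S) x) :
    IsGreatest (γ '' T) x := by
  have hle : ∀ y ∈ T, γ y ≤ x := fun y hy => by
    obtain ⟨c, hc, hcy⟩ := (hγ y hy).1
    exact hcy ▸ ((hφ c hc).2 ⟨y, hy, rfl⟩).trans (hx.2 ⟨c, hc, rfl⟩)
  obtain ⟨c, hc, rfl⟩ := hx.1
  obtain ⟨y, hy, hcy⟩ := (hφ c hc).1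
  refine ⟨⟨y, hy, (hle y hy).antisymm ?_⟩, ?_⟩
  · exact hcy ▸ (hγ y hy).2 ⟨c, hc, rfl⟩
  · rintro _ ⟨y, hy, rfl⟩
    exact hle y hy

end PartialOptimization

section Rpow

open scoped MatrixOrder Matrix.Norms.L2Operator

variable {n : Type*} [Fintype n] [DecidableEq n]

lemma conjTranspose_rpow (A : Matrix n n ℂ) (x : ℝ) : (A ^ x)ᴴ = A ^ x :=
  (nonneg_iff_posSemidef.1 CFC.rpow_nonneg).1

lemma rpow_add_of_exponents_nonneg (A : Matrix n n ℂ) {x y : ℝ} (hx : 0 ≤ x) (hy : 0 ≤ y) :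
    A ^ (x + y) = A ^ x * A ^ y := by
  simp only [CFC.rpow_def, NNReal.rpow_add_of_nonneg _ hx hy]
  exact cfc_mul _ _ A (NNReal.continuous_rpow_const hx).continuousOn
    (NNReal.continuous_rpow_const hy).continuousOn

lemma rpow_half_mul_rpow_half (A : Matrix n n ℂ) {x : ℝ} (hx : 0 ≤ x) :
    A ^ (x / 2) * A ^ (x / 2) = A ^ x := by
  rw [← rpow_add_of_exponents_nonneg A (by positivity) (by positivity), add_halves]

lemma posDef_rpow {A : Matrix n n ℂ} (hA : A.PosDef) (x : ℝ) : (A ^ x).PosDef :=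
  isStrictlyPositive_iff_posDef.1 (IsStrictlyPositive.rpow A x (isStrictlyPositive_iff_posDef.2 hA))

lemma smul_rpow {A : Matrix n n ℂ} (hA : 0 ≤ A) {k : ℝ} (hk : 0 ≤ k) (x : ℝ) :
    (k • A) ^ x = k ^ x • A ^ x := by
  have hspec : ∀ y ∈ spectrum ℝ A, (k * y) ^ x = k ^ x * y ^ x := fun y hy =>
    Real.mul_rpow hk (spectrum_nonneg_of_nonneg hA hy)
  have hcont : ∀ (B : Matrix n n ℂ) (f : ℝ → ℝ), ContinuousOn f (spectrum ℝ B) := fun B f =>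
    B.finite_real_spectrum.continuousOn f
  rw [CFC.rpow_eq_cfc_real (smul_nonneg hk hA), CFC.rpow_eq_cfc_real hA,
    ← cfc_const_mul (k ^ x) _ A (hcont _ _), ← cfc_congr hspec,
    ← cfc_const_mul_id k A, ← cfc_comp' (fun y : ℝ => y ^ x) (fun y : ℝ => k * y) A
      ((A.finite_real_spectrum.image _).continuousOn _)]

end Rpow

section TraceOfProduct

open scoped MatrixOrder Matrix.Norms.L2Operator

variable {m n : Type*} [Fintype m]

lemma conjTranspose_mul_mul_nonneg [Finite n] {A : Matrix m m ℂ} (hA : 0 ≤ A) (L : Matrix m n ℂ) :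
    0 ≤ Lᴴ * A * L :=
  nonneg_iff_posSemidef.2 ((nonneg_iff_posSemidef.1 hA).conjTranspose_mul_mul_same L)

lemma mul_mul_conjTranspose_nonneg [Finite n] {A : Matrix m m ℂ} (hA : 0 ≤ A) (L : Matrix n m ℂ) :
    0 ≤ L * A * Lᴴ :=
  nonneg_iff_posSemidef.2 ((nonneg_iff_posSemidef.1 hA).mul_mul_conjTranspose_same L)

lemma re_trace_nonneg {A : Matrix m m ℂ} (hA : 0 ≤ A) : 0 ≤ (trace A).re :=
  (Complex.nonneg_iff.1 (nonneg_iff_posSemidef.1 hA).trace_nonneg).1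

lemma re_trace_mul_nonneg {A B : Matrix m m ℂ} (hA : 0 ≤ A) (hB : 0 ≤ B) :
    0 ≤ (trace (A * B)).re := by
  classical
  have h := re_trace_nonneg (conjTranspose_mul_mul_nonneg hA (B ^ (1 / 2 : ℝ)))
  rwa [conjTranspose_rpow, trace_mul_comm, ← mul_assoc, rpow_half_mul_rpow_half B zero_le_one,
    CFC.rpow_one B, trace_mul_comm] at h

lemma re_trace_mul_le_re_trace_mul {A A' B B' : Matrix m m ℂ} (hA : A ≤ A') (hB : B ≤ B')
    (hA0 : 0 ≤ A) (hB0 : 0 ≤ B') : (trace (A * B)).re ≤ (trace (A' * B')).re := by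
  have h₁ := re_trace_mul_nonneg (sub_nonneg.2 hA) hB0
  have h₂ := re_trace_mul_nonneg hA0 (sub_nonneg.2 hB)
  simp only [Matrix.sub_mul, Matrix.mul_sub, trace_sub, Complex.sub_re] at h₁ h₂
  linarith

end TraceOfProduct

section BispectralForm

open scoped MatrixOrder Matrix.Norms.L2Operator

variable {m n : Type*} [Fintype m] [Fintype n] [DecidableEq m] [DecidableEq n]
  {A : Matrix m m ℂ} {B : Matrix n n ℂ} {L : Matrix m n ℂ}

/-- The quadratic form `⟨L, φ(λ, ρ) L⟩` for the Hilbert–Schmidt inner product, where `λ` and `ρ`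
are the commuting operators of left multiplication by `A` and right multiplication by `B`. It is
written in the joint eigenbasis given by the spectral decompositions of `A` and `B`. -/
noncomputable def bispectralForm (hA : A.IsHermitian)
    (hB : B.IsHermitian) (L : Matrix m n ℂ) (φ : ℝ → ℝ → ℝ) : ℝ :=
  ∑ j, ∑ k, ‖((hA.eigenvectorUnitary : Matrix m m ℂ)ᴴ * L *
    (hB.eigenvectorUnitary : Matrix n n ℂ)) j k‖ ^ 2 * φ (hA.eigenvalues j) (hB.eigenvalues k)

lemma re_trace_conjTranspose_mul_diagonal_mul_mul_diagonal (M : Matrix m n ℂ) (x : m → ℝ)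
    (y : n → ℝ) :
    (trace (Mᴴ * diagonal (fun j => (x j : ℂ)) * M * diagonal (fun k => (y k : ℂ)))).re =
      ∑ j, ∑ k, ‖M j k‖ ^ 2 * (x j * y k) := by
  have hterm : ∀ j k, (star (M j k) * (x j : ℂ) * M j k * (y k : ℂ)).re =
      ‖M j k‖ ^ 2 * (x j * y k) := fun j k => by
    have h : star (M j k) * (x j : ℂ) * M j k * (y k : ℂ) =
        ((‖M j k‖ ^ 2 * (x j * y k) : ℝ) : ℂ) := by
      push_cast
      rw [← Complex.conj_mul', Complex.star_def]
      ring
    rw [h, Complex.ofReal_re]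
  simp only [trace, diag_apply, mul_diagonal]
  rw [Finset.sum_comm, Complex.re_sum]
  refine Finset.sum_congr rfl fun k _ => ?_
  rw [mul_apply, Finset.sum_mul, Complex.re_sum]
  exact Finset.sum_congr rfl fun j _ => by rw [← hterm, mul_diagonal, conjTranspose_apply]

lemma re_trace_conj_cfc_mul_cfc (hA : A.IsHermitian) (hB : B.IsHermitian) (f g : ℝ → ℝ) :
    (trace (Lᴴ * cfc f A * L * cfc g B)).re =
      bispectralForm hA hB L (fun a b => f a * g b) := by
  have hdiag := re_trace_conjTranspose_mul_diagonal_mul_mul_diagonal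
    ((hA.eigenvectorUnitary : Matrix m m ℂ)ᴴ * L * (hB.eigenvectorUnitary : Matrix n n ℂ))
    (f ∘ hA.eigenvalues) (g ∘ hB.eigenvalues)
  rw [bispectralForm]
  refine Eq.trans ?_ hdiag
  rw [hA.cfc_eq, hB.cfc_eq, IsHermitian.cfc, IsHermitian.cfc, Unitary.conjStarAlgAut_apply,
    Unitary.conjStarAlgAut_apply, ← mul_assoc, ← mul_assoc, trace_mul_comm]
  simp only [conjTranspose_mul, star_eq_conjTranspose, conjTranspose_conjTranspose,
    Matrix.mul_assoc]
  rfl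

lemma re_trace_conj_rpow_mul_rpow (hA : A.PosSemidef) (hB : B.PosSemidef) (x y : ℝ) :
    (trace (Lᴴ * A ^ x * L * B ^ y)).re =
      bispectralForm hA.1 hB.1 L (fun a b => a ^ x * b ^ y) := by
  rw [CFC.rpow_eq_cfc_real (nonneg_iff_posSemidef.2 hA),
    CFC.rpow_eq_cfc_real (nonneg_iff_posSemidef.2 hB), re_trace_conj_cfc_mul_cfc]

lemma bispectralForm_le_bispectralForm (hA : A.PosSemidef) (hB : B.PosSemidef) {φ ψ : ℝ → ℝ → ℝ}
    (h : ∀ a b, 0 ≤ a → 0 ≤ b → φ a b ≤ ψ a b) :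
    bispectralForm hA.1 hB.1 L φ ≤ bispectralForm hA.1 hB.1 L ψ :=
  Finset.sum_le_sum fun j _ => Finset.sum_le_sum fun k _ =>
    mul_le_mul_of_nonneg_left (h _ _ (hA.eigenvalues_nonneg j) (hB.eigenvalues_nonneg k))
      (sq_nonneg _)

end BispectralForm

section TraceRpow

open scoped MatrixOrder Matrix.Norms.L2Operator

variable {n : Type*} [Fintype n] [DecidableEq n] {A B : Matrix n n ℂ}

/-- `Re Tr A ^ c`, the power being that of the continuous functional calculus; for `A ≥ 0` the
trace is real. -/
noncomputable def traceRpow (A : Matrix n n ℂ) (c : ℝ) : ℝ := (trace (A ^ c)).re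

lemma traceRpow_nonneg (A : Matrix n n ℂ) (c : ℝ) : 0 ≤ traceRpow A c :=
  re_trace_nonneg CFC.rpow_nonneg

lemma traceRpow_smul (hA : 0 ≤ A) {k : ℝ} (hk : 0 ≤ k) (c : ℝ) :
    traceRpow (k • A) c = k ^ c * traceRpow A c := by
  rw [traceRpow, smul_rpow hA hk, trace_smul, Complex.smul_re, smul_eq_mul, traceRpow]

lemma re_trace_cfc (hA : A.IsHermitian) (f : ℝ → ℝ) :
    (trace (cfc f A)).re = ∑ i, f (hA.eigenvalues i) := by
  rw [hA.cfc_eq, IsHermitian.cfc, Unitary.conjStarAlgAut_apply, trace_mul_comm, ← mul_assoc,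
    Unitary.coe_star_mul_self, one_mul, trace_diagonal, Complex.re_sum]
  rfl

lemma traceRpow_eq_of_charpoly_eq (hA : 0 ≤ A) (hB : 0 ≤ B) (h : A.charpoly = B.charpoly)
    (c : ℝ) : traceRpow A c = traceRpow B c := by
  have hA' := (nonneg_iff_posSemidef.1 hA).1
  have hB' := (nonneg_iff_posSemidef.1 hB).1
  rw [traceRpow, traceRpow, CFC.rpow_eq_cfc_real hA, CFC.rpow_eq_cfc_real hB, re_trace_cfc hA',
    re_trace_cfc hB', (hA'.eigenvalues_eq_eigenvalues_iff hB').2 h]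

lemma traceRpow_conjTranspose_mul_self (X : Matrix n n ℂ) (c : ℝ) :
    traceRpow (Xᴴ * X) c = traceRpow (X * Xᴴ) c :=
  traceRpow_eq_of_charpoly_eq (nonneg_iff_posSemidef.2 (posSemidef_conjTranspose_mul_self X))
    (nonneg_iff_posSemidef.2 (posSemidef_self_mul_conjTranspose X)) (charpoly_mul_comm _ _) c

lemma traceRpow_conjTranspose_mul_mul (hA : 0 ≤ A) (X : Matrix n n ℂ) (c : ℝ) :
    traceRpow (Xᴴ * A * X) c =
      traceRpow (A ^ (1 / 2 : ℝ) * (X * Xᴴ) * A ^ (1 / 2 : ℝ)) c := by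
  have h := traceRpow_conjTranspose_mul_self (A ^ (1 / 2 : ℝ) * X) c
  simp only [conjTranspose_mul, conjTranspose_rpow, Matrix.mul_assoc] at h ⊢
  rw [← h, ← mul_assoc (A ^ (1 / 2 : ℝ)), rpow_half_mul_rpow_half A zero_le_one, CFC.rpow_one A]

lemma continuousOn_rpow_Ici {x : ℝ} (hx : 0 ≤ x) :
    ContinuousOn (fun A : Matrix n n ℂ => A ^ x) (Set.Ici 0) := by
  rcases hx.eq_or_lt with rfl | hx
  · exact continuousOn_const.congr fun A hA => CFC.rpow_zero A hA
  · refine (CFC.continuousOn_nnrpow (A := Matrix n n ℂ) ⟨x, hx.le⟩).congr fun A _ => ?_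
    exact (CFC.nnrpow_eq_rpow (x := ⟨x, hx.le⟩) hx).symm

lemma continuousOn_traceRpow {c : ℝ} (hc : 0 ≤ c) :
    ContinuousOn (fun A : Matrix n n ℂ => traceRpow A c) (Set.Ici 0) :=
  Complex.continuous_re.comp_continuousOn
    (continuous_id.matrix_trace.comp_continuousOn (continuousOn_rpow_Ici hc))

end TraceRpow

section KrausMap

open scoped MatrixOrder Matrix.Norms.L2Operator

variable {ι m n : Type*} [Fintype ι] [Fintype m]

/-- The completely positive map `X ↦ ∑ i, (J i)ᴴ * X * J i` with Kraus operators `J i`. Its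
Hilbert–Schmidt adjoint is the Kraus map of the conjugate transposes of the `J i`. -/
def krausMap (J : ι → Matrix m n ℂ) : Matrix m m ℂ →ₗ[ℂ] Matrix n n ℂ where
  toFun X := ∑ i, (J i)ᴴ * X * J i
  map_add' X Y := by simp only [Matrix.mul_add, Matrix.add_mul, Finset.sum_add_distrib]
  map_smul' c X := by
    simp only [Matrix.mul_smul, Matrix.smul_mul, Finset.smul_sum, RingHom.id_apply]

variable (J : ι → Matrix m n ℂ) {X : Matrix m m ℂ}

lemma krausMap_apply (X : Matrix m m ℂ) : krausMap J X = ∑ i, (J i)ᴴ * X * J i := rfl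

lemma krausMap_nonneg [Finite n] (hX : 0 ≤ X) : 0 ≤ krausMap J X :=
  Finset.sum_nonneg fun i _ => conjTranspose_mul_mul_nonneg hX (J i)

lemma krausMap_conjTranspose_mul_mul {l : Type*} [Fintype l] (Y : Matrix l l ℂ)
    (R : Matrix l m ℂ) :
    krausMap J (Rᴴ * Y * R) = krausMap (fun i => R * J i) Y := by
  simp only [krausMap_apply, conjTranspose_mul, Matrix.mul_assoc]

variable [Fintype n]

lemma conjTranspose_mul_krausMap_mul {l : Type*} (X : Matrix m m ℂ) (R : Matrix n l ℂ) :
    Rᴴ * krausMap J X * R = krausMap (fun i => J i * R) X := by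
  simp only [krausMap_apply, Matrix.mul_sum, Matrix.sum_mul, conjTranspose_mul, Matrix.mul_assoc]

lemma trace_krausMap_mul (X : Matrix m m ℂ) (V : Matrix n n ℂ) :
    trace (krausMap J X * V) = trace (X * krausMap (fun i => (J i)ᴴ) V) := by
  simp only [krausMap_apply, Matrix.sum_mul, Matrix.mul_sum, trace_sum, conjTranspose_conjTranspose]
  refine Finset.sum_congr rfl fun i _ => ?_
  rw [Matrix.mul_assoc, Matrix.mul_assoc, trace_mul_comm]
  simp only [Matrix.mul_assoc]

end KrausMap

section ParallelForm

open scoped MatrixOrder Matrix.Norms.L2Operator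

variable {m n : Type*} [Fintype m] [Fintype n]

/-- The energy of the splitting `L = X + (L - X)`: the form of `τ⁻¹ λ` on the first part plus that
of `ρ` on the second, where `λ` and `ρ` are left multiplication by `x.1` and right multiplication
by `x.2`. -/
noncomputable def splittingEnergy (L : Matrix m n ℂ) (τ : ℝ)
    (x : Matrix m m ℂ × Matrix n n ℂ) (X : Matrix m n ℂ) : ℝ :=
  τ⁻¹ * (trace (Xᴴ * x.1 * X)).re + (trace ((L - X)ᴴ * (L - X) * x.2)).re

/-- The quadratic form in `L` of the parallel sum of `τ⁻¹ λ` and `ρ`, with `λ` and `ρ` as in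
`splittingEnergy`. As an infimum of functions linear in `x` it is concave in `x`. -/
noncomputable def parallelForm (L : Matrix m n ℂ) (τ : ℝ) (x : Matrix m m ℂ × Matrix n n ℂ) : ℝ :=
  sInf (Set.range (splittingEnergy L τ x))

lemma concaveOn_splittingEnergy (L X : Matrix m n ℂ) (τ : ℝ) :
    ConcaveOn ℝ (Set.Ici 0 ×ˢ Set.Ici 0) fun x => splittingEnergy L τ x X := by
  refine ⟨(convex_Ici 0).prod (convex_Ici 0), fun x _ y _ s t _ _ _ => le_of_eq ?_⟩
  simp only [splittingEnergy, Prod.fst_add, Prod.snd_add, Prod.smul_fst, Prod.smul_snd,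
    Matrix.mul_add, Matrix.add_mul, Matrix.mul_smul, Matrix.smul_mul, trace_add, trace_smul,
    Complex.add_re, Complex.smul_re, smul_eq_mul]
  ring

lemma norm_add_sq_mul_parallel_le {a b τ : ℝ} (ha : 0 ≤ a) (hb : 0 ≤ b) (hτ : 0 < τ) (x y : ℂ) :
    ‖x + y‖ ^ 2 * (a * b / (a + τ * b)) ≤ τ⁻¹ * (‖x‖ ^ 2 * a) + ‖y‖ ^ 2 * b := by
  have hden : 0 ≤ a + τ * b := by positivity
  rcases hden.eq_or_lt with h | h
  · rw [← h, div_zero, mul_zero]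
    positivity
  calc ‖x + y‖ ^ 2 * (a * b / (a + τ * b))
      ≤ (‖x‖ + ‖y‖) ^ 2 * (a * b / (a + τ * b)) := by gcongr; exact norm_add_le x y
    _ ≤ τ⁻¹ * (‖x‖ ^ 2 * a) + ‖y‖ ^ 2 * b := by
        rw [← mul_div_assoc, div_le_iff₀ h]
        have hsq : (τ⁻¹ * (‖x‖ ^ 2 * a) + ‖y‖ ^ 2 * b) * (a + τ * b) -
            (‖x‖ + ‖y‖) ^ 2 * (a * b) = τ⁻¹ * (‖x‖ * a - τ * ‖y‖ * b) ^ 2 := by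
          field_simp
          ring
        have : 0 ≤ τ⁻¹ * (‖x‖ * a - τ * ‖y‖ * b) ^ 2 := by positivity
        linarith

lemma norm_sq_mul_parallel_eq {a b τ : ℝ} (ha : 0 ≤ a) (hb : 0 ≤ b) (hτ : 0 < τ) (z : ℂ) :
    τ⁻¹ * (‖z * ((τ * b / (a + τ * b) : ℝ) : ℂ)‖ ^ 2 * a) +
      ‖z - z * ((τ * b / (a + τ * b) : ℝ) : ℂ)‖ ^ 2 * b = ‖z‖ ^ 2 * (a * b / (a + τ * b)) := by
  have hden : 0 ≤ a + τ * b := by positivity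
  rcases hden.eq_or_lt with h | h
  · have hb0 : b = 0 := by
      by_contra hb0
      have : 0 < τ * b := by positivity
      linarith
    simp [hb0]
  · have hcompl : z - z * ((τ * b / (a + τ * b) : ℝ) : ℂ) = z * ((a / (a + τ * b) : ℝ) : ℂ) := by
      rw [← mul_one_sub, ← Complex.ofReal_one, ← Complex.ofReal_sub]
      congr 2
      field_simp
      ring
    rw [hcompl, norm_mul, norm_mul, mul_pow, mul_pow, Complex.norm_real, Complex.norm_real,
      Real.norm_eq_abs, Real.norm_eq_abs, sq_abs, sq_abs]
    field_simp
    ring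

section SpectralMinimizer

variable [DecidableEq m] [DecidableEq n] {A : Matrix m m ℂ} {B : Matrix n n ℂ}

lemma splittingEnergy_eq_sum (hA : A.IsHermitian) (hB : B.IsHermitian) (L X : Matrix m n ℂ)
    (τ : ℝ) :
    splittingEnergy L τ (A, B) X =
      ∑ j, ∑ k, (τ⁻¹ * (‖((hA.eigenvectorUnitary : Matrix m m ℂ)ᴴ * X *
          (hB.eigenvectorUnitary : Matrix n n ℂ)) j k‖ ^ 2 * hA.eigenvalues j) +
        ‖((hA.eigenvectorUnitary : Matrix m m ℂ)ᴴ * (L - X) *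
          (hB.eigenvectorUnitary : Matrix n n ℂ)) j k‖ ^ 2 * hB.eigenvalues k) := by
  have hX := re_trace_conj_cfc_mul_cfc (L := X) hA hB id (fun _ => 1)
  have hY := re_trace_conj_cfc_mul_cfc (L := L - X) hA hB (fun _ => 1) id
  rw [cfc_id ℝ A, cfc_const_one ℝ B, Matrix.mul_one] at hX
  rw [cfc_id ℝ B, cfc_const_one ℝ A, Matrix.mul_one] at hY
  simp only [splittingEnergy, hX, hY, bispectralForm, id, mul_one, one_mul, Finset.sum_add_distrib,
    Finset.mul_sum]

lemma isLeast_splittingEnergy (hA : A.PosSemidef) (hB : B.PosSemidef) (L : Matrix m n ℂ) {τ : ℝ}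
    (hτ : 0 < τ) :
    IsLeast (Set.range (splittingEnergy L τ (A, B)))
      (bispectralForm hA.1 hB.1 L fun a b => a * b / (a + τ * b)) := by
  refine ⟨?_, ?_⟩
  · let U := (hA.1.eigenvectorUnitary : Matrix m m ℂ)
    let V := (hB.1.eigenvectorUnitary : Matrix n n ℂ)
    let Z : Matrix m n ℂ := Matrix.of fun j k => (Uᴴ * L * V) j k *
      ((τ * hB.1.eigenvalues k / (hA.1.eigenvalues j + τ * hB.1.eigenvalues k) : ℝ) : ℂ)
    have hU : Uᴴ * U = 1 := Unitary.coe_star_mul_self hA.1.eigenvectorUnitary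
    have hV : Vᴴ * V = 1 := Unitary.coe_star_mul_self hB.1.eigenvectorUnitary
    have hZ : Uᴴ * (U * Z * Vᴴ) * V = Z := by
      calc Uᴴ * (U * Z * Vᴴ) * V = (Uᴴ * U) * Z * (Vᴴ * V) := by simp only [Matrix.mul_assoc]
        _ = Z := by rw [hU, hV, Matrix.one_mul, Matrix.mul_one]
    refine ⟨U * Z * Vᴴ, ?_⟩
    rw [splittingEnergy_eq_sum hA.1 hB.1, Matrix.mul_sub, Matrix.sub_mul, hZ]
    exact Finset.sum_congr rfl fun j _ => Finset.sum_congr rfl fun k _ =>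
      norm_sq_mul_parallel_eq (hA.eigenvalues_nonneg j) (hB.eigenvalues_nonneg k) hτ _
  · rintro _ ⟨X, rfl⟩
    rw [splittingEnergy_eq_sum hA.1 hB.1]
    refine Finset.sum_le_sum fun j _ => Finset.sum_le_sum fun k _ => ?_
    refine le_trans (le_of_eq ?_) (norm_add_sq_mul_parallel_le (hA.eigenvalues_nonneg j)
      (hB.eigenvalues_nonneg k) hτ _ _)
    rw [← Matrix.add_apply, ← Matrix.add_mul, ← Matrix.mul_add, add_sub_cancel]

lemma parallelForm_eq_bispectralForm (hA : A.PosSemidef) (hB : B.PosSemidef) (L : Matrix m n ℂ)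
    {τ : ℝ} (hτ : 0 < τ) :
    parallelForm L τ (A, B) = bispectralForm hA.1 hB.1 L fun a b => a * b / (a + τ * b) :=
  (isLeast_splittingEnergy hA hB L hτ).csInf_eq

end SpectralMinimizer

lemma concaveOn_parallelForm (L : Matrix m n ℂ) {τ : ℝ} (hτ : 0 < τ) :
    ConcaveOn ℝ (Set.Ici 0 ×ˢ Set.Ici 0) (parallelForm L τ) := by
  classical
  refine concaveOn_of_isGLB (g := splittingEnergy L τ) (T := Set.univ)
    (fun X _ => concaveOn_splittingEnergy L X τ) ((convex_Ici 0).prod (convex_Ici 0)) fun x hx => ?_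
  have hA := nonneg_iff_posSemidef.1 (Set.mem_Ici.1 hx.1)
  have hB := nonneg_iff_posSemidef.1 (Set.mem_Ici.1 hx.2)
  rw [Set.image_univ, parallelForm_eq_bispectralForm hA hB L hτ]
  exact (isLeast_splittingEnergy hA hB L hτ).isGLB

end ParallelForm

section LiebConcavity

open MeasureTheory
open scoped MatrixOrder Matrix.Norms.L2Operator

lemma exists_measure_rpow_mul_rpow_eq_integral {p : ℝ} (hp : p ∈ Set.Ioo (0 : ℝ) 1) :
    ∃ μ : Measure ℝ, ∀ a b : ℝ, 0 ≤ a → 0 ≤ b →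
      IntegrableOn (fun τ => τ ^ (p - 1) * (a * b / (a + τ * b))) (Set.Ioi 0) μ ∧
      a ^ p * b ^ (1 - p) = ∫ τ in Set.Ioi 0, τ ^ (p - 1) * (a * b / (a + τ * b)) ∂μ := by
  obtain ⟨μ, hμ⟩ := Real.exists_measure_rpow_eq_integral_rpowIntegrand₀₁ hp
  refine ⟨μ, fun a b ha hb => ?_⟩
  rcases hb.eq_or_lt with rfl | hb
  · simp [Real.zero_rpow (sub_pos.2 hp.2).ne']
  have hquot : 0 ≤ a / b := by positivity
  have hscale : Set.EqOn (fun τ => b * Real.rpowIntegrand₀₁ p τ (a / b))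
      (fun τ => τ ^ (p - 1) * (a * b / (a + τ * b))) (Set.Ioi 0) := by
    intro τ (hτ : 0 < τ)
    have hadd : τ + a / b = (a + τ * b) / b := by
      field_simp
      ring
    simp only [Real.rpowIntegrand₀₁_eq_pow_div hp hτ.le hquot, hadd]
    field_simp
  refine ⟨IntegrableOn.congr_fun ((hμ _ hquot).1.const_mul b) hscale measurableSet_Ioi, ?_⟩
  rw [← setIntegral_congr_fun measurableSet_Ioi hscale, integral_const_mul, ← (hμ _ hquot).2,
    Real.div_rpow ha hb.le, Real.rpow_sub hb, Real.rpow_one]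
  ring

variable {m n : Type*} [Fintype m] [Fintype n] [DecidableEq m] [DecidableEq n]
  {A : Matrix m m ℂ} {B : Matrix n n ℂ}

lemma integrable_bispectralForm {α : Type*} {_ : MeasurableSpace α} {μ : Measure α}
    {φ : α → ℝ → ℝ → ℝ} (hA : A.PosSemidef) (hB : B.PosSemidef) (L : Matrix m n ℂ)
    (hφ : ∀ a b, 0 ≤ a → 0 ≤ b → Integrable (fun τ => φ τ a b) μ) :
    Integrable (fun τ => bispectralForm hA.1 hB.1 L (φ τ)) μ :=
  integrable_finsetSum _ fun j _ => integrable_finsetSum _ fun k _ =>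
    (hφ _ _ (hA.eigenvalues_nonneg j) (hB.eigenvalues_nonneg k)).const_mul _

lemma integral_bispectralForm {α : Type*} {_ : MeasurableSpace α} {μ : Measure α}
    {φ : α → ℝ → ℝ → ℝ} (hA : A.PosSemidef) (hB : B.PosSemidef) (L : Matrix m n ℂ)
    (hφ : ∀ a b, 0 ≤ a → 0 ≤ b → Integrable (fun τ => φ τ a b) μ) :
    ∫ τ, bispectralForm hA.1 hB.1 L (φ τ) ∂μ =
      bispectralForm hA.1 hB.1 L fun a b => ∫ τ, φ τ a b ∂μ := by
  have hterm := fun j k => (hφ _ _ (hA.eigenvalues_nonneg j) (hB.eigenvalues_nonneg k)).const_mul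
    (‖((hA.1.eigenvectorUnitary : Matrix m m ℂ)ᴴ * L *
      (hB.1.eigenvectorUnitary : Matrix n n ℂ)) j k‖ ^ 2)
  simp only [bispectralForm]
  rw [integral_finsetSum _ fun j _ => integrable_finsetSum _ fun k _ => hterm j k]
  refine Finset.sum_congr rfl fun j _ => ?_
  rw [integral_finsetSum _ fun k _ => hterm j k]
  exact Finset.sum_congr rfl fun k _ => integral_const_mul _ _

lemma exists_measure_re_trace_conj_rpow_mul_rpow_eq_integral (L : Matrix m n ℂ) {p : ℝ}
    (hp : p ∈ Set.Ioo (0 : ℝ) 1) :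
    ∃ μ : Measure ℝ, ∀ A : Matrix m m ℂ, ∀ B : Matrix n n ℂ, 0 ≤ A → 0 ≤ B →
      IntegrableOn (fun τ => τ ^ (p - 1) * parallelForm L τ (A, B)) (Set.Ioi 0) μ ∧
      (trace (Lᴴ * A ^ p * L * B ^ (1 - p))).re =
        ∫ τ in Set.Ioi 0, τ ^ (p - 1) * parallelForm L τ (A, B) ∂μ := by
  obtain ⟨μ, hμ⟩ := exists_measure_rpow_mul_rpow_eq_integral hp
  refine ⟨μ, fun A B hA hB => ?_⟩
  rw [nonneg_iff_posSemidef] at hA hB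
  have hform : Set.EqOn
      (fun τ => bispectralForm hA.1 hB.1 L fun a b => τ ^ (p - 1) * (a * b / (a + τ * b)))
      (fun τ => τ ^ (p - 1) * parallelForm L τ (A, B)) (Set.Ioi 0) := by
    intro τ hτ
    simp only [parallelForm_eq_bispectralForm hA hB L hτ, bispectralForm, Finset.mul_sum]
    exact Finset.sum_congr rfl fun j _ => Finset.sum_congr rfl fun k _ => mul_left_comm _ _ _
  have hφi := fun a b (ha : 0 ≤ a) (hb : 0 ≤ b) => (hμ a b ha hb).1
  refine ⟨IntegrableOn.congr_fun (integrable_bispectralForm hA hB L hφi) hform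
    measurableSet_Ioi, ?_⟩
  rw [← setIntegral_congr_fun measurableSet_Ioi hform, integral_bispectralForm hA hB L hφi,
    re_trace_conj_rpow_mul_rpow hA hB]
  exact Finset.sum_congr rfl fun j _ => Finset.sum_congr rfl fun k _ => congrArg _
    (hμ _ _ (hA.eigenvalues_nonneg j) (hB.eigenvalues_nonneg k)).2

lemma concaveOn_re_trace_conj_rpow_mul_rpow_one_sub (L : Matrix m n ℂ) {p : ℝ}
    (hp : p ∈ Set.Icc (0 : ℝ) 1) :
    ConcaveOn ℝ (Set.Ici 0 ×ˢ Set.Ici 0) fun x : Matrix m m ℂ × Matrix n n ℂ =>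
      (trace (Lᴴ * x.1 ^ p * L * x.2 ^ (1 - p))).re := by
  have hconv : Convex ℝ (Set.Ici (0 : Matrix m m ℂ) ×ˢ Set.Ici (0 : Matrix n n ℂ)) :=
    (convex_Ici 0).prod (convex_Ici 0)
  rcases hp.1.eq_or_lt with rfl | hp₀
  · refine (concaveOn_splittingEnergy L 0 1).congr fun x hx => ?_
    simp [splittingEnergy, CFC.rpow_zero x.1 hx.1, CFC.rpow_one x.2 hx.2]
  rcases hp.2.eq_or_lt with rfl | hp₁
  · refine (concaveOn_splittingEnergy L L 1).congr fun x hx => ?_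
    simp [splittingEnergy, CFC.rpow_one x.1 hx.1, CFC.rpow_zero x.2 hx.2]
  obtain ⟨μ, hμ⟩ := exists_measure_re_trace_conj_rpow_mul_rpow_eq_integral L ⟨hp₀, hp₁⟩
  refine ConcaveOn.congr (integral_concaveOn_of_integrand_ae (μ := μ.restrict (Set.Ioi 0))
    (f := fun τ x => τ ^ (p - 1) * parallelForm L τ x) hconv ?_
    fun x hx => (hμ x.1 x.2 hx.1 hx.2).1) fun x hx => (hμ x.1 x.2 hx.1 hx.2).2.symm
  filter_upwards [ae_restrict_mem measurableSet_Ioi] with τ hτ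
  exact (concaveOn_parallelForm L hτ).smul (Real.rpow_nonneg (le_of_lt hτ) _)

lemma re_trace_conj_rpow_mul_rpow_le_of_le {A A' : Matrix m m ℂ} {B B' : Matrix n n ℂ}
    (L : Matrix m n ℂ) {x y : ℝ} (hx : x ∈ Set.Icc (0 : ℝ) 1) (hy : y ∈ Set.Icc (0 : ℝ) 1)
    (hA : A ≤ A') (hB : B ≤ B') :
    (trace (Lᴴ * A ^ x * L * B ^ y)).re ≤ (trace (Lᴴ * A' ^ x * L * B' ^ y)).re := by
  have hAx : 0 ≤ A ^ x := CFC.rpow_nonneg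
  have hBy : 0 ≤ B' ^ y := CFC.rpow_nonneg
  refine re_trace_mul_le_re_trace_mul ?_ (CFC.rpow_le_rpow hy hB)
    (conjTranspose_mul_mul_nonneg hAx L) hBy
  rw [← sub_nonneg, ← Matrix.sub_mul, ← Matrix.mul_sub]
  exact conjTranspose_mul_mul_nonneg (sub_nonneg.2 (CFC.rpow_le_rpow hx hA)) L

-- Operator concavity and monotonicity reduce `p + w ≤ 1` to exponents with sum `1`, applied to the
-- powers `x.1 ^ (p + w)` and `x.2 ^ (p + w)`.
lemma concaveOn_re_trace_conj_rpow_mul_rpow (L : Matrix m n ℂ) {p w : ℝ} (hp : 0 ≤ p) (hw : 0 ≤ w)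
    (hpw : p + w ≤ 1) :
    ConcaveOn ℝ (Set.Ici 0 ×ˢ Set.Ici 0) fun x : Matrix m m ℂ × Matrix n n ℂ =>
      (trace (Lᴴ * x.1 ^ p * L * x.2 ^ w)).re := by
  have hconv : Convex ℝ (Set.Ici (0 : Matrix m m ℂ) ×ˢ Set.Ici (0 : Matrix n n ℂ)) :=
    (convex_Ici 0).prod (convex_Ici 0)
  rcases (add_nonneg hp hw).eq_or_lt with hσ | hσ
  · obtain rfl : p = 0 := by linarith
    obtain rfl : w = 0 := by linarith
    refine (concaveOn_const (trace (Lᴴ * L)).re hconv).congr fun x hx => ?_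
    simp [CFC.rpow_zero x.1 hx.1, CFC.rpow_zero x.2 hx.2]
  have hσ1 : p + w ∈ Set.Icc (0 : ℝ) 1 := ⟨hσ.le, hpw⟩
  have hp' : p / (p + w) ∈ Set.Icc (0 : ℝ) 1 := ⟨by positivity, (div_le_one hσ).2 (by linarith)⟩
  have hw' : 1 - p / (p + w) = w / (p + w) := by
    field_simp
    ring
  have hw'' : 1 - p / (p + w) ∈ Set.Icc (0 : ℝ) 1 := ⟨by linarith [hp'.2], by linarith [hp'.1]⟩
  have hlieb := concaveOn_re_trace_conj_rpow_mul_rpow_one_sub L hp'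
  have hpow : ∀ x : Matrix m m ℂ × Matrix n n ℂ, x ∈ Set.Ici 0 ×ˢ Set.Ici 0 →
      (trace (Lᴴ * x.1 ^ p * L * x.2 ^ w)).re = (trace (Lᴴ * (x.1 ^ (p + w)) ^ (p / (p + w)) * L *
        (x.2 ^ (p + w)) ^ (1 - p / (p + w)))).re := fun x hx => by
    rw [hw', CFC.rpow_rpow_of_exponent_nonneg x.1 _ _ hσ.le hp'.1 hx.1,
      CFC.rpow_rpow_of_exponent_nonneg x.2 _ _ hσ.le (by positivity) hx.2,
      mul_div_cancel₀ _ hσ.ne', mul_div_cancel₀ _ hσ.ne']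
  refine ⟨hconv, fun x hx y hy s t hs ht hst => ?_⟩
  have hmem : ∀ z : Matrix m m ℂ × Matrix n n ℂ, (z.1 ^ (p + w), z.2 ^ (p + w)) ∈
      Set.Ici (0 : Matrix m m ℂ) ×ˢ Set.Ici (0 : Matrix n n ℂ) := fun z =>
    ⟨Set.mem_Ici.2 CFC.rpow_nonneg, Set.mem_Ici.2 CFC.rpow_nonneg⟩
  simp only [hpow x hx, hpow y hy, hpow _ (hconv hx hy hs ht hst)]
  refine (hlieb.2 (hmem x) (hmem y) hs ht hst).trans ?_
  exact re_trace_conj_rpow_mul_rpow_le_of_le L hp' hw''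
    ((CFC.concaveOn_rpow hσ1).2 hx.1 hy.1 hs ht hst)
    ((CFC.concaveOn_rpow hσ1).2 hx.2 hy.2 hs ht hst)

lemma concaveOn_re_trace_krausMap_rpow_mul_rpow {ι : Type*} [Fintype ι] (J : ι → Matrix m n ℂ)
    {p w : ℝ} (hp : 0 ≤ p) (hw : 0 ≤ w) (hpw : p + w ≤ 1) :
    ConcaveOn ℝ (Set.Ici 0 ×ˢ Set.Ici 0) fun x : Matrix m m ℂ × Matrix n n ℂ =>
      (trace (krausMap J (x.1 ^ p) * x.2 ^ w)).re := by
  have hsum : (fun x : Matrix m m ℂ × Matrix n n ℂ => (trace (krausMap J (x.1 ^ p) * x.2 ^ w)).re) =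
      ∑ i, fun x => (trace ((J i)ᴴ * x.1 ^ p * J i * x.2 ^ w)).re := by
    ext x
    rw [krausMap_apply, Matrix.sum_mul, trace_sum, Complex.re_sum, Finset.sum_apply]
  rw [hsum]
  exact Finset.sum_induction _ (ConcaveOn ℝ (Set.Ici 0 ×ˢ Set.Ici 0)) (fun _ _ h h' => h.add h')
    (concaveOn_const 0 ((convex_Ici 0).prod (convex_Ici 0)))
    fun i _ => concaveOn_re_trace_conj_rpow_mul_rpow (J i) hp hw hpw

end LiebConcavity

section YoungVariationalPrinciple

open scoped MatrixOrder Matrix.Norms.L2Operator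

variable {n : Type*} [Fintype n] [DecidableEq n] {X Y U : Matrix n n ℂ} {c : ℝ}

lemma re_trace_mul_rpow_sub_le (hX : 0 ≤ X) (hU : 0 ≤ U) (hc : 1 ≤ c) :
    (trace (X * U ^ (1 - c⁻¹))).re - (1 - c⁻¹) * (trace U).re ≤ c⁻¹ * traceRpow X c := by
  have hX' := nonneg_iff_posSemidef.1 hX
  have hU' := nonneg_iff_posSemidef.1 hU
  have hyoung : ∀ x u : ℝ, 0 ≤ x → 0 ≤ u →
      x ^ (1 : ℝ) * u ^ (1 - c⁻¹) ≤ c⁻¹ * (x ^ c * u ^ (0 : ℝ)) +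
        (1 - c⁻¹) * (x ^ (0 : ℝ) * u ^ (1 : ℝ)) := fun x u hx hu => by
    have h := Real.geom_mean_le_arith_mean2_weighted (inv_nonneg.2 (zero_le_one.trans hc))
      (sub_nonneg.2 (inv_le_one_of_one_le₀ hc)) (Real.rpow_nonneg hx c) hu (add_sub_cancel _ _)
    rw [← Real.rpow_mul hx, mul_inv_cancel₀ (zero_lt_one.trans_le hc).ne'] at h
    simpa using h
  have hform := bispectralForm_le_bispectralForm (L := 1) hX' hU' hyoung
  have hlin : ∀ φ ψ : ℝ → ℝ → ℝ, ∀ k l : ℝ,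
      bispectralForm hX'.1 hU'.1 1 (fun x u => k * φ x u + l * ψ x u) =
        k * bispectralForm hX'.1 hU'.1 1 φ + l * bispectralForm hX'.1 hU'.1 1 ψ := fun φ ψ k l => by
    simp only [bispectralForm, mul_add, mul_left_comm _ k, mul_left_comm _ l,
      Finset.sum_add_distrib, Finset.mul_sum]
  rw [hlin] at hform
  simp only [← re_trace_conj_rpow_mul_rpow hX' hU', conjTranspose_one, one_mul, mul_one,
    CFC.rpow_one X, CFC.rpow_one U, CFC.rpow_zero X, CFC.rpow_zero U] at hform
  rw [traceRpow]
  linarith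

lemma isGreatest_re_trace_mul_rpow_sub (hX : 0 ≤ X) (hc : 1 ≤ c) :
    IsGreatest ((fun U => (trace (X * U ^ (1 - c⁻¹))).re - (1 - c⁻¹) * (trace U).re) '' Set.Ici 0)
      (c⁻¹ * traceRpow X c) := by
  have hc₀ : c ≠ 0 := (zero_lt_one.trans_le hc).ne'
  refine ⟨⟨X ^ c, Set.mem_Ici.2 CFC.rpow_nonneg, ?_⟩, ?_⟩
  · have hpow : X * (X ^ c) ^ (1 - c⁻¹) = X ^ c := by
      rw [CFC.rpow_rpow_of_exponent_nonneg X _ _ (zero_le_one.trans hc)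
        (sub_nonneg.2 (inv_le_one_of_one_le₀ hc)), mul_one_sub, mul_inv_cancel₀ hc₀]
      nth_rewrite 1 [← CFC.rpow_one X]
      rw [← rpow_add_of_exponents_nonneg X zero_le_one (sub_nonneg.2 hc), add_sub_cancel]
    simp only [hpow, traceRpow]
    ring
  · rintro _ ⟨U, hU, rfl⟩
    exact re_trace_mul_rpow_sub_le hX hU hc

lemma traceRpow_le_traceRpow (hX : 0 ≤ X) (hXY : X ≤ Y) (hc : 1 ≤ c) :
    traceRpow X c ≤ traceRpow Y c := by
  obtain ⟨U, hU, hXU⟩ := (isGreatest_re_trace_mul_rpow_sub hX hc).1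
  have hYU := re_trace_mul_rpow_sub_le (hX.trans hXY) hU hc
  have hUc : 0 ≤ U ^ (1 - c⁻¹) := CFC.rpow_nonneg
  have htrace := re_trace_mul_le_re_trace_mul hXY le_rfl hX hUc
  refine le_of_mul_le_mul_left ?_ (inv_pos.2 (zero_lt_one.trans_le hc))
  simp only at hXU
  linarith

lemma convexOn_traceRpow (hc : 1 ≤ c) :
    ConvexOn ℝ (Set.Ici 0) fun X : Matrix n n ℂ => traceRpow X c := by
  have hc₀ : 0 < c := zero_lt_one.trans_le hc
  have hconv : ConvexOn ℝ (Set.Ici 0) fun X : Matrix n n ℂ => c⁻¹ * traceRpow X c := by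
    refine convexOn_of_isLUB (fun U _ => ⟨convex_Ici 0, fun X _ Y _ a b _ _ hab => ?_⟩)
      (convex_Ici 0) fun X hX => (isGreatest_re_trace_mul_rpow_sub hX hc).isLUB
    refine le_of_eq ?_
    simp only [Matrix.add_mul, Matrix.smul_mul, trace_add, trace_smul, Complex.add_re,
      Complex.smul_re, smul_eq_mul]
    linear_combination (1 - c⁻¹) * (trace U).re * hab
  refine (hconv.smul hc₀.le).congr fun X _ => ?_
  simp [hc₀.ne']

lemma concaveOn_traceRpow_krausMap_rpow {ι m : Type*} [Fintype ι] [Fintype m] [DecidableEq m]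
    (J : ι → Matrix m n ℂ) {p : ℝ} (hp : 0 ≤ p) (hc : 1 ≤ c) (hpc : p ≤ c⁻¹) :
    ConcaveOn ℝ (Set.Ici 0) fun A : Matrix m m ℂ => traceRpow (krausMap J (A ^ p)) c := by
  have hc₀ : 0 < c := zero_lt_one.trans_le hc
  have hobj : ConcaveOn ℝ (Set.Ici 0 ×ˢ Set.Ici 0) fun x : Matrix m m ℂ × Matrix n n ℂ =>
      (trace (krausMap J (x.1 ^ p) * x.2 ^ (1 - c⁻¹))).re - (1 - c⁻¹) * (trace x.2).re := by
    refine (concaveOn_re_trace_krausMap_rpow_mul_rpow J hp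
      (sub_nonneg.2 (inv_le_one_of_one_le₀ hc)) (by linarith)).sub
      ⟨(convex_Ici 0).prod (convex_Ici 0), fun x _ y _ a b _ _ _ => le_of_eq ?_⟩
    simp only [Prod.snd_add, Prod.smul_snd, trace_add, trace_smul, Complex.add_re,
      Complex.smul_re, smul_eq_mul]
    ring
  have hmax : ConcaveOn ℝ (Set.Ici 0) fun A : Matrix m m ℂ =>
      c⁻¹ * traceRpow (krausMap J (A ^ p)) c := by
    refine concaveOn_of_isGreatest hobj (convex_Ici 0) fun A _ => ?_
    have hnonneg : 0 ≤ krausMap J (A ^ p) := krausMap_nonneg J CFC.rpow_nonneg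
    have hyoung := isGreatest_re_trace_mul_rpow_sub hnonneg hc
    exact hyoung
  refine (hmax.smul hc₀.le).congr fun A _ => ?_
  simp [hc₀.ne']

end YoungVariationalPrinciple

section HolderVariationalPrinciple

open scoped MatrixOrder Matrix.Norms.L2Operator

variable {n : Type*} [Fintype n] [DecidableEq n] {M N P X : Matrix n n ℂ} {a b s : ℝ}

lemma rpow_neg_half_mul_rpow_neg_half (hP : P.PosDef) :
    P ^ (-(1 / 2) : ℝ) * P ^ (-(1 / 2) : ℝ) = P⁻¹ := by
  have hP' := isStrictlyPositive_iff_posDef.2 hP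
  rw [← CFC.rpow_add hP'.isUnit, nonsing_inv_eq_ringInverse, CFC.inverse_eq_rpow_neg_one hP']
  norm_num

lemma traceRpow_rpow_neg_half_mul_mul (hM : 0 ≤ M) (hP : P.PosDef) (b : ℝ) :
    traceRpow (P ^ (-(1 / 2) : ℝ) * M * P ^ (-(1 / 2) : ℝ)) b =
      traceRpow (M ^ (1 / 2 : ℝ) * P⁻¹ * M ^ (1 / 2 : ℝ)) b := by
  have h := traceRpow_conjTranspose_mul_mul hM (P ^ (-(1 / 2) : ℝ)) b
  rwa [conjTranspose_rpow, rpow_neg_half_mul_rpow_neg_half hP] at h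

lemma two_mul_re_trace_conjTranspose_mul_le (hP : P.PosDef) (Y Z : Matrix n n ℂ) :
    2 * (trace (Yᴴ * Z)).re ≤ (trace (Yᴴ * P * Y)).re + (trace (Zᴴ * P⁻¹ * Z)).re := by
  have hunit : IsUnit P.det := (isUnit_iff_isUnit_det _).1 hP.isUnit
  have hsq := re_trace_nonneg (conjTranspose_mul_mul_nonneg
    (nonneg_iff_posSemidef.2 hP.inv.posSemidef) (P * Y - Z))
  have hexpand : (P * Y - Z)ᴴ * P⁻¹ * (P * Y - Z) =
      Yᴴ * P * Y - Yᴴ * Z - Zᴴ * Y + Zᴴ * P⁻¹ * Z := by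
    rw [conjTranspose_sub, conjTranspose_mul, hP.1.eq, Matrix.sub_mul,
      mul_nonsing_inv_cancel_right _ _ hunit, Matrix.sub_mul, Matrix.mul_sub, Matrix.mul_sub,
      Matrix.mul_assoc Zᴴ, nonsing_inv_mul_cancel_left _ _ hunit, Matrix.mul_assoc Yᴴ,
      Matrix.mul_assoc Zᴴ]
    abel
  have hconj : (trace (Zᴴ * Y)).re = (trace (Yᴴ * Z)).re := by
    rw [← conjTranspose_conjTranspose (Zᴴ * Y), conjTranspose_mul, trace_conjTranspose,
      conjTranspose_conjTranspose, Complex.star_def, Complex.conj_re]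
  rw [hexpand] at hsq
  simp only [trace_add, trace_sub, Complex.add_re, Complex.sub_re, hconj] at hsq
  linarith

lemma trace_rpow_half_mul_mul_rpow_half (N P : Matrix n n ℂ) {x : ℝ} (hx : 0 ≤ x) :
    trace (N ^ (x / 2) * P * N ^ (x / 2)) = trace (P * N ^ x) := by
  rw [Matrix.mul_assoc, trace_mul_comm, Matrix.mul_assoc, rpow_half_mul_rpow_half N hx]

lemma two_mul_traceRpow_le (N : Matrix n n ℂ) (hP : P.PosDef) {x y : ℝ} (hx : 0 ≤ x)
    (hy : 0 ≤ y) (hxy : x + y = 2 * s) :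
    2 * traceRpow N s ≤ (trace (P * N ^ x)).re + (trace (P⁻¹ * N ^ y)).re := by
  have h := two_mul_re_trace_conjTranspose_mul_le hP (N ^ (x / 2)) (N ^ (y / 2))
  rwa [conjTranspose_rpow, conjTranspose_rpow, trace_rpow_half_mul_mul_rpow_half N P hx,
    trace_rpow_half_mul_mul_rpow_half N P⁻¹ hy,
    ← rpow_add_of_exponents_nonneg N (by positivity) (by positivity),
    show x / 2 + y / 2 = s by linarith] at h

lemma inv_mul_traceRpow_le (hN : 0 ≤ N) (hP : P.PosDef) (habs : a.HolderTriple b s)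
    (ha : 1 ≤ a) (hb : 1 ≤ b) :
    s⁻¹ * traceRpow N s ≤
      a⁻¹ * traceRpow P a + b⁻¹ * traceRpow (N ^ (1 / 2 : ℝ) * P⁻¹ * N ^ (1 / 2 : ℝ)) b := by
  have hs : 0 < s := habs.pos'
  have ha' : 0 ≤ 1 - a⁻¹ := sub_nonneg.2 (inv_le_one_of_one_le₀ ha)
  have hb' : 0 ≤ 1 - b⁻¹ := sub_nonneg.2 (inv_le_one_of_one_le₀ hb)
  have hexp : s * (1 - a⁻¹) + (1 + s * (1 - b⁻¹)) = 2 * s := by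
    have h := congrArg (s * ·) habs.inv_add_inv_eq_inv
    simp only [mul_inv_cancel₀ hs.ne'] at h
    linarith
  have hNs : 0 ≤ N ^ s := CFC.rpow_nonneg
  have hM : 0 ≤ N ^ (1 / 2 : ℝ) * P⁻¹ * N ^ (1 / 2 : ℝ) := by
    have h := conjTranspose_mul_mul_nonneg (nonneg_iff_posSemidef.2 hP.inv.posSemidef)
      (N ^ (1 / 2 : ℝ))
    rwa [conjTranspose_rpow] at h
  have hcomm : trace (N ^ (1 / 2 : ℝ) * P⁻¹ * N ^ (1 / 2 : ℝ) * N ^ (s * (1 - b⁻¹))) =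
      trace (P⁻¹ * N ^ (1 + s * (1 - b⁻¹))) := by
    rw [Matrix.mul_assoc, Matrix.mul_assoc, trace_mul_comm, Matrix.mul_assoc, Matrix.mul_assoc,
      ← rpow_add_of_exponents_nonneg N (by positivity) (by norm_num),
      ← rpow_add_of_exponents_nonneg N (by norm_num) (by positivity)]
    congr 3
    ring
  have hyoung_a := re_trace_mul_rpow_sub_le (nonneg_iff_posSemidef.2 hP.posSemidef) hNs ha
  have hyoung_b := re_trace_mul_rpow_sub_le hM hNs hb
  have hcross := two_mul_traceRpow_le N hP (by positivity) (by positivity) hexp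
  rw [CFC.rpow_rpow_of_exponent_nonneg N _ _ hs.le ha'] at hyoung_a
  rw [CFC.rpow_rpow_of_exponent_nonneg N _ _ hs.le hb', hcomm] at hyoung_b
  rw [← habs.inv_add_inv_eq_inv]
  simp only [traceRpow] at hcross hyoung_a hyoung_b ⊢
  linarith

lemma inv_mul_traceRpow_eq (hN : N.PosDef) (habs : a.HolderTriple b s) :
    s⁻¹ * traceRpow N s = a⁻¹ * traceRpow (N ^ (s * a⁻¹)) a +
      b⁻¹ * traceRpow (N ^ (1 / 2 : ℝ) * (N ^ (s * a⁻¹))⁻¹ * N ^ (1 / 2 : ℝ)) b := by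
  have hN' := isStrictlyPositive_iff_posDef.2 hN
  have hs : 0 < s := habs.pos'
  have ha : 0 < a := habs.pos
  have hb : 0 < b := habs.symm.pos
  have hinv : (N ^ (s * a⁻¹))⁻¹ = N ^ (-(s * a⁻¹)) :=
    inv_eq_left_inv (CFC.rpow_neg_mul_rpow _ hN')
  have hexp : 1 / 2 + -(s * a⁻¹) + 1 / 2 = s * b⁻¹ := by
    have h := congrArg (s * ·) habs.inv_add_inv_eq_inv
    simp only [mul_inv_cancel₀ hs.ne'] at h
    linarith
  rw [hinv, ← CFC.rpow_add hN'.isUnit, ← CFC.rpow_add hN'.isUnit, hexp,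
    ← habs.inv_add_inv_eq_inv]
  simp only [traceRpow]
  rw [CFC.rpow_rpow_of_exponent_nonneg N _ _ (by positivity) ha.le,
    CFC.rpow_rpow_of_exponent_nonneg N _ _ (by positivity) hb.le, inv_mul_cancel_right₀ ha.ne',
    inv_mul_cancel_right₀ hb.ne']
  ring

lemma posDef_mul_mul_conjTranspose (hM : M.PosDef) (hX : IsUnit X) : (X * M * Xᴴ).PosDef :=
  hM.mul_mul_conjTranspose_same (vecMul_injective_of_isUnit hX)

lemma traceRpow_rpow_half_mul_inv_mul_conj (hM : 0 ≤ M) (hP : P.PosDef) (hX : IsUnit X) (b : ℝ) :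
    traceRpow ((X * M * Xᴴ) ^ (1 / 2 : ℝ) * (X * P * Xᴴ)⁻¹ * (X * M * Xᴴ) ^ (1 / 2 : ℝ)) b =
      traceRpow (P ^ (-(1 / 2) : ℝ) * M * P ^ (-(1 / 2) : ℝ)) b := by
  have hdet : IsUnit X.det := (isUnit_iff_isUnit_det X).1 hX
  have hdet' : IsUnit (Xᴴ).det := by rwa [det_conjTranspose, isUnit_star]
  have h := traceRpow_conjTranspose_mul_mul (mul_mul_conjTranspose_nonneg hM X)
    ((Xᴴ)⁻¹ * P ^ (-(1 / 2) : ℝ)) b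
  have hinv : (X * P * Xᴴ)⁻¹ =
      (Xᴴ)⁻¹ * P ^ (-(1 / 2) : ℝ) * ((Xᴴ)⁻¹ * P ^ (-(1 / 2) : ℝ))ᴴ := by
    rw [conjTranspose_mul, conjTranspose_rpow, conjTranspose_nonsing_inv,
      conjTranspose_conjTranspose, Matrix.mul_inv_rev, Matrix.mul_inv_rev,
      ← rpow_neg_half_mul_rpow_neg_half hP]
    simp only [Matrix.mul_assoc]
  rw [hinv, ← h, conjTranspose_mul, conjTranspose_rpow, conjTranspose_nonsing_inv,
    conjTranspose_conjTranspose]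
  simp only [Matrix.mul_assoc, mul_nonsing_inv_cancel_left _ _ hdet',
    nonsing_inv_mul_cancel_left _ _ hdet]

/-- The objective whose infimum over positive definite `P` is `s⁻¹ * Tr (X * M * Xᴴ) ^ s` when
`a⁻¹ + b⁻¹ = s⁻¹`. It separates the dependence on `X` from that on `M`. -/
noncomputable def holderForm (a b : ℝ) (X M P : Matrix n n ℂ) : ℝ :=
  a⁻¹ * traceRpow (X * P * Xᴴ) a +
    b⁻¹ * traceRpow (P ^ (-(1 / 2) : ℝ) * M * P ^ (-(1 / 2) : ℝ)) b

lemma inv_mul_traceRpow_le_holderForm (habs : a.HolderTriple b s) (ha : 1 ≤ a) (hb : 1 ≤ b)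
    (hX : IsUnit X) (hM : 0 ≤ M) (hP : P.PosDef) :
    s⁻¹ * traceRpow (X * M * Xᴴ) s ≤ holderForm a b X M P := by
  have h := inv_mul_traceRpow_le (mul_mul_conjTranspose_nonneg hM X)
    (posDef_mul_mul_conjTranspose hP hX) habs ha hb
  rwa [traceRpow_rpow_half_mul_inv_mul_conj hM hP hX] at h

lemma isLeast_holderForm (habs : a.HolderTriple b s) (ha : 1 ≤ a) (hb : 1 ≤ b)
    (hX : IsUnit X) (hM : M.PosDef) :
    IsLeast (holderForm a b X M '' {P | P.PosDef}) (s⁻¹ * traceRpow (X * M * Xᴴ) s) := by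
  have hM0 : 0 ≤ M := nonneg_iff_posSemidef.2 hM.posSemidef
  have hdet : IsUnit X.det := (isUnit_iff_isUnit_det X).1 hX
  have hdet' : IsUnit (Xᴴ).det := by rwa [det_conjTranspose, isUnit_star]
  have hN := posDef_mul_mul_conjTranspose hM hX
  have hP : (X⁻¹ * (X * M * Xᴴ) ^ (s * a⁻¹) * (X⁻¹)ᴴ).PosDef :=
    posDef_mul_mul_conjTranspose (posDef_rpow hN _) (isUnit_nonsing_inv_iff.2 hX)
  have hXP : X * (X⁻¹ * (X * M * Xᴴ) ^ (s * a⁻¹) * (X⁻¹)ᴴ) * Xᴴ = (X * M * Xᴴ) ^ (s * a⁻¹) := by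
    rw [conjTranspose_nonsing_inv, ← Matrix.mul_assoc, ← Matrix.mul_assoc,
      nonsing_inv_mul_cancel_right _ _ hdet', mul_nonsing_inv _ hdet, one_mul]
  refine ⟨⟨_, hP, ?_⟩, ?_⟩
  · rw [holderForm, ← traceRpow_rpow_half_mul_inv_mul_conj hM0 hP hX, hXP,
      inv_mul_traceRpow_eq hN habs]
  · rintro _ ⟨P, hP, rfl⟩
    exact inv_mul_traceRpow_le_holderForm habs ha hb hX hM0 hP

lemma holderForm_le_holderForm (hb : 1 ≤ b) {M' : Matrix n n ℂ} (hM : 0 ≤ M) (hMM' : M ≤ M')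
    (X P : Matrix n n ℂ) : holderForm a b X M P ≤ holderForm a b X M' P := by
  have hsub := conjTranspose_mul_mul_nonneg (sub_nonneg.2 hMM') (P ^ (-(1 / 2) : ℝ))
  have hnonneg := conjTranspose_mul_mul_nonneg hM (P ^ (-(1 / 2) : ℝ))
  rw [conjTranspose_rpow] at hsub hnonneg
  rw [Matrix.mul_sub, Matrix.sub_mul, sub_nonneg] at hsub
  have hmono := traceRpow_le_traceRpow hnonneg hsub hb
  unfold holderForm
  gcongr

lemma tendsto_traceRpow_conj_add_smul_one (hM : 0 ≤ M) (hs : 0 ≤ s) (X : Matrix n n ℂ) :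
    Filter.Tendsto (fun ε : ℝ => traceRpow (X * (M + ε • 1) * Xᴴ) s) (nhdsWithin 0 (Set.Ioi 0))
      (nhds (traceRpow (X * M * Xᴴ) s)) := by
  have hcont : ContinuousOn (fun ε : ℝ => traceRpow (X * (M + ε • 1) * Xᴴ) s) (Set.Ici 0) := by
    refine (continuousOn_traceRpow hs).comp (by fun_prop) fun ε hε => ?_
    exact mul_mul_conjTranspose_nonneg (add_nonneg hM (smul_nonneg hε zero_le_one)) X
  have h := (hcont 0 Set.self_mem_Ici).mono Set.Ioi_subset_Ici_self
  simpa only [ContinuousWithinAt, zero_smul, add_zero] using h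

lemma isGLB_holderForm (habs : a.HolderTriple b s) (ha : 1 ≤ a) (hb : 1 ≤ b)
    (hX : IsUnit X) (hM : 0 ≤ M) :
    IsGLB (holderForm a b X M '' {P | P.PosDef}) (s⁻¹ * traceRpow (X * M * Xᴴ) s) := by
  refine ⟨?_, fun z hz => ?_⟩
  · rintro _ ⟨P, hP, rfl⟩
    exact inv_mul_traceRpow_le_holderForm habs ha hb hX hM hP
  · refine ge_of_tendsto ((tendsto_traceRpow_conj_add_smul_one hM habs.pos'.le X).const_mul s⁻¹)
      (eventually_mem_nhdsWithin.mono fun ε hε => ?_)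
    have hpos : (M + ε • (1 : Matrix n n ℂ)).PosDef :=
      PosDef.posSemidef_add (nonneg_iff_posSemidef.1 hM) (PosDef.one.smul hε)
    obtain ⟨P, hP, hPeq⟩ := (isLeast_holderForm habs ha hb hX hpos).1
    rw [← hPeq]
    exact (hz ⟨P, hP, rfl⟩).trans (holderForm_le_holderForm hb hM
      (le_add_of_nonneg_right (smul_nonneg (le_of_lt hε) zero_le_one)) X P)

lemma holderForm_krausMap {ι m : Type*} [Fintype ι] [Fintype m] (J : ι → Matrix m n ℂ) (a b : ℝ)
    (X P : Matrix n n ℂ) (Y : Matrix m m ℂ) :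
    holderForm a b X (krausMap J Y) P = a⁻¹ * traceRpow (X * P * Xᴴ) a +
      b⁻¹ * traceRpow (krausMap (fun i => J i * P ^ (-(1 / 2) : ℝ)) Y) b := by
  have hconj := conjTranspose_mul_krausMap_mul J Y (P ^ (-(1 / 2) : ℝ))
  rw [conjTranspose_rpow] at hconj
  rw [holderForm, hconj]

end HolderVariationalPrinciple

section JointConcavity

open scoped MatrixOrder Matrix.Norms.L2Operator

lemma convex_posDef (n : Type*) : Convex ℝ {A : Matrix n n ℂ | A.PosDef} :=
  convex_iff_forall_pos.2 fun _ hA _ hB _ _ ha hb _ => (hA.smul ha).add (hB.smul hb)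

variable {ι m n : Type*} [Fintype m] [DecidableEq m] [Fintype n] [DecidableEq n]

lemma concaveOn_traceRpow_rpow_half_mul_mul {N : Matrix n n ℂ} (hN : 0 ≤ N) {q a : ℝ} (hq : 0 ≤ q)
    (ha : 1 ≤ a) (hqa : q ≤ a⁻¹) : ConcaveOn ℝ (Set.Ici 0) fun B : Matrix n n ℂ =>
      traceRpow (B ^ (q / 2) * N * B ^ (q / 2)) a := by
  refine (concaveOn_traceRpow_krausMap_rpow (fun _ : Unit => N ^ (1 / 2 : ℝ)) hq ha hqa).congr
    fun B _ => ?_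
  have hswap := traceRpow_conjTranspose_mul_mul hN (B ^ (q / 2)) a
  rw [conjTranspose_rpow, rpow_half_mul_rpow_half B hq] at hswap
  simp only [hswap, krausMap_apply, conjTranspose_rpow, Finset.univ_unique, Finset.sum_singleton]

variable [Fintype ι] (J : ι → Matrix m n ℂ) {q v a b u : ℝ}

lemma concaveOn_holderForm_rpow_half_krausMap_rpow {P : Matrix n n ℂ} (hP : 0 ≤ P) (hq : 0 ≤ q)
    (hv : 0 ≤ v) (ha : 1 ≤ a) (hqa : q ≤ a⁻¹) (hb : 1 ≤ b) (hvb : v ≤ b⁻¹) :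
    ConcaveOn ℝ (Set.Ici 0 ×ˢ Set.Ici 0) fun x : Matrix n n ℂ × Matrix m m ℂ =>
      holderForm a b (x.1 ^ (q / 2)) (krausMap J (x.2 ^ v)) P := by
  have hconvex : Convex ℝ (Set.Ici (0 : Matrix n n ℂ) ×ˢ Set.Ici (0 : Matrix m m ℂ)) :=
    (convex_Ici 0).prod (convex_Ici 0)
  have hfst := ((concaveOn_traceRpow_rpow_half_mul_mul hP hq ha hqa).comp_linearMap
    (LinearMap.fst ℝ (Matrix n n ℂ) (Matrix m m ℂ))).subset (fun x hx => hx.1) hconvex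
  have hsnd := ((concaveOn_traceRpow_krausMap_rpow (fun i => J i * P ^ (-(1 / 2) : ℝ)) hv hb
    hvb).comp_linearMap (LinearMap.snd ℝ (Matrix n n ℂ) (Matrix m m ℂ))).subset
      (fun x hx => hx.2) hconvex
  have ha' : 0 ≤ a⁻¹ := inv_nonneg.2 (zero_le_one.trans ha)
  have hb' : 0 ≤ b⁻¹ := inv_nonneg.2 (zero_le_one.trans hb)
  refine ((hfst.smul ha').add (hsnd.smul hb')).congr fun x _ => ?_
  simp only [holderForm_krausMap, conjTranspose_rpow, Pi.add_apply, Function.comp_apply,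
    LinearMap.fst_apply, LinearMap.snd_apply, smul_eq_mul]

lemma isUnit_rpow {B : Matrix n n ℂ} (hB : B.PosDef) (x : ℝ) : IsUnit (B ^ x) :=
  (isStrictlyPositive_iff_posDef.2 (posDef_rpow hB x)).isUnit

lemma concaveOn_traceRpow_rpow_half_mul_krausMap_rpow_mul (hq : 0 < q) (hv : 0 ≤ v) (hu : 1 ≤ u)
    (hqvu : q + v ≤ u⁻¹) :
    ConcaveOn ℝ ({B | B.PosDef} ×ˢ Set.Ici 0) fun x : Matrix n n ℂ × Matrix m m ℂ =>
      traceRpow (x.1 ^ (q / 2) * krausMap J (x.2 ^ v) * x.1 ^ (q / 2)) u := by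
  have hdomain : {B : Matrix n n ℂ | B.PosDef} ×ˢ Set.Ici (0 : Matrix m m ℂ) ⊆
      Set.Ici 0 ×ˢ Set.Ici 0 :=
    Set.prod_mono_left fun B hB => nonneg_iff_posSemidef.2 hB.posSemidef
  have hconvex : Convex ℝ ({B : Matrix n n ℂ | B.PosDef} ×ˢ Set.Ici (0 : Matrix m m ℂ)) :=
    (convex_posDef n).prod (convex_Ici 0)
  rcases hv.eq_or_lt with rfl | hv
  · have hepstein := concaveOn_traceRpow_rpow_half_mul_mul (krausMap_nonneg J zero_le_one) hq.le hu
      ((add_zero q).symm.trans_le hqvu)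
    refine ((hepstein.comp_linearMap (LinearMap.fst ℝ (Matrix n n ℂ) (Matrix m m ℂ))).subset
      (fun x hx => (hdomain hx).1) hconvex).congr fun x hx => ?_
    have hone : x.2 ^ (0 : ℝ) = 1 := CFC.rpow_zero x.2 hx.2
    simp only [hone, Function.comp_apply, LinearMap.fst_apply]
  · have hu' : u⁻¹ ≤ 1 := inv_le_one_of_one_le₀ hu
    have ha : 1 ≤ (u⁻¹ - v)⁻¹ := (one_le_inv₀ (by linarith)).2 (by linarith)
    have hb : 1 ≤ v⁻¹ := (one_le_inv₀ hv).2 (by linarith)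
    have habu : (u⁻¹ - v)⁻¹.HolderTriple v⁻¹ u :=
      ⟨by simp, by linarith, by linarith⟩
    have hscaled : ConcaveOn ℝ ({B | B.PosDef} ×ˢ Set.Ici 0) fun x : Matrix n n ℂ × Matrix m m ℂ =>
        u⁻¹ * traceRpow (x.1 ^ (q / 2) * krausMap J (x.2 ^ v) * x.1 ^ (q / 2)) u := by
      refine concaveOn_of_isGLB (T := {P : Matrix n n ℂ | P.PosDef}) (fun P hP =>
        (concaveOn_holderForm_rpow_half_krausMap_rpow J (nonneg_iff_posSemidef.2 hP.posSemidef)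
          hq.le hv.le ha (by rw [inv_inv]; linarith) hb (inv_inv v).ge).subset hdomain hconvex)
        hconvex fun x hx => ?_
      have hnonneg : 0 ≤ krausMap J (x.2 ^ v) := krausMap_nonneg J CFC.rpow_nonneg
      have hglb := isGLB_holderForm habu ha hb (isUnit_rpow hx.1 (q / 2)) hnonneg
      rwa [conjTranspose_rpow] at hglb
    refine (hscaled.smul (zero_le_one.trans hu)).congr fun x _ => ?_
    simp [(zero_lt_one.trans_le hu).ne']

end JointConcavity

section DensityMatrices

open scoped MatrixOrder Matrix.Norms.L2Operator

variable {n : Type*} [Fintype n] [DecidableEq n] {A C T : Matrix n n ℂ} {u : ℝ}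

lemma IsDensity.nonneg (hC : IsDensity C) : 0 ≤ C := nonneg_iff_posSemidef.2 hC.1

lemma IsDensity.le_one (hC : IsDensity C) : C ≤ 1 := by
  rw [CFC.le_one_iff (R := ℝ) C hC.1.1.isSelfAdjoint, hC.1.1.spectrum_real_eq_range_eigenvalues]
  rintro _ ⟨i, rfl⟩
  have hsum : ∑ j, hC.1.1.eigenvalues j = 1 := by
    have h := congrArg Complex.re (hC.1.1.trace_eq_sum_eigenvalues.symm.trans hC.2)
    simpa using h
  rw [← hsum]
  exact Finset.single_le_sum (fun j _ => hC.1.eigenvalues_nonneg j) (Finset.mem_univ i)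

lemma isDensity_inv_re_trace_smul (hA : 0 ≤ A) (h : (trace A).re ≠ 0) :
    IsDensity ((trace A).re⁻¹ • A) := by
  have hA' := nonneg_iff_posSemidef.1 hA
  have hnonneg := hA'.trace_nonneg
  have htrace : trace A = ((trace A).re : ℂ) :=
    Complex.ext rfl (Complex.nonneg_iff.1 hnonneg).2.symm
  refine ⟨hA'.smul (inv_nonneg.2 (Complex.nonneg_iff.1 hnonneg).1), ?_⟩
  rw [trace_smul, Complex.real_smul]
  nth_rewrite 2 [htrace]
  rw [← Complex.ofReal_mul, inv_mul_cancel₀ h, Complex.ofReal_one]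

lemma nonempty_isDensity [Nonempty n] : {C : Matrix n n ℂ | IsDensity C}.Nonempty :=
  ⟨_, isDensity_inv_re_trace_smul zero_le_one (by simp)⟩

lemma convex_isDensity : Convex ℝ {C : Matrix n n ℂ | IsDensity C} := by
  refine fun C hC D hD a b ha hb hab => ⟨(hC.1.smul ha).add (hD.1.smul hb), ?_⟩
  rw [trace_add, trace_smul, trace_smul, hC.2, hD.2, ← add_smul, hab, one_smul]

lemma isCompact_isDensity : IsCompact {C : Matrix n n ℂ | IsDensity C} := by
  have : ProperSpace (Matrix n n ℂ) := FiniteDimensional.proper ℂ _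
  refine Metric.isCompact_of_isClosed_isBounded ?_ ?_
  · have hclosed : IsClosed {C : Matrix n n ℂ | 0 ≤ C ∧ trace C = 1} :=
      isClosed_Ici.inter (isClosed_eq (by fun_prop) continuous_const)
    simp only [nonneg_iff_posSemidef] at hclosed
    exact hclosed
  · refine (Metric.isBounded_closedBall (x := 0) (r := 1)).subset fun C hC => ?_
    exact mem_closedBall_zero_iff.2 ((CStarAlgebra.norm_le_one_iff_of_nonneg C hC.nonneg).2
      hC.le_one)

lemma isGreatest_sSup_image_isDensity [Nonempty n] {f : Matrix n n ℂ → ℝ}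
    (hf : ContinuousOn f {C | IsDensity C}) :
    IsGreatest (f '' {C | IsDensity C}) (sSup (f '' {C | IsDensity C})) :=
  (isCompact_isDensity.image_of_continuousOn hf).isGreatest_sSup (nonempty_isDensity.image f)

lemma eq_zero_of_traceRpow_eq_zero (hT : 0 ≤ T) (hu : 0 < u) (h : traceRpow T u = 0) : T = 0 := by
  have hTu : 0 ≤ T ^ u := CFC.rpow_nonneg
  have htrace := (nonneg_iff_posSemidef.1 hTu).trace_nonneg
  have hzero : T ^ u = 0 := (nonneg_iff_posSemidef.1 hTu).trace_eq_zero_iff.1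
    (Complex.ext h (Complex.nonneg_iff.1 htrace).2.symm)
  rw [← CFC.rpow_one T, ← mul_inv_cancel₀ hu.ne',
    ← CFC.rpow_rpow_of_exponent_nonneg T _ _ hu.le (inv_nonneg.2 hu.le), hzero]
  exact CFC.zero_rpow (inv_ne_zero hu.ne')

lemma re_trace_rpow_mul_le (hT : 0 ≤ T) (hC : IsDensity C) (hu : 1 ≤ u) :
    (trace (C ^ (1 - u⁻¹) * T)).re ≤ traceRpow T u ^ u⁻¹ := by
  have hu₀ : 0 < u := zero_lt_one.trans_le hu
  rcases (traceRpow_nonneg T u).eq_or_lt with hzero | hpos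
  · rw [eq_zero_of_traceRpow_eq_zero hT hu₀ hzero.symm, mul_zero, trace_zero, Complex.zero_re]
    exact Real.rpow_nonneg (traceRpow_nonneg _ _) _
  set x := traceRpow T u ^ u⁻¹ with hx
  have hx₀ : 0 < x := Real.rpow_pos_of_pos hpos _
  have hnorm : traceRpow (x⁻¹ • T) u = 1 := by
    rw [traceRpow_smul hT (inv_nonneg.2 hx₀.le), Real.inv_rpow hx₀.le, hx,
      Real.rpow_inv_rpow hpos.le hu₀.ne', inv_mul_cancel₀ hpos.ne']
  have hyoung := re_trace_mul_rpow_sub_le (smul_nonneg (inv_nonneg.2 hx₀.le) hT) hC.nonneg hu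
  rw [hnorm, hC.2, Matrix.smul_mul, trace_smul, Complex.smul_re, smul_eq_mul, Complex.one_re,
    trace_mul_comm] at hyoung
  exact (inv_mul_le_one₀ hx₀).1 (by linarith)

lemma re_trace_rpow_mul_inv_traceRpow_smul (hT : 0 ≤ T) (hpos : 0 < traceRpow T u) (hu : 1 ≤ u) :
    (trace (((traceRpow T u)⁻¹ • T ^ u) ^ (1 - u⁻¹) * T)).re = traceRpow T u ^ u⁻¹ := by
  have hu₀ : 0 < u := zero_lt_one.trans_le hu
  have hu' : 0 ≤ 1 - u⁻¹ := sub_nonneg.2 (inv_le_one_of_one_le₀ hu)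
  have hTu : 0 ≤ T ^ u := CFC.rpow_nonneg
  have hpow : (T ^ u) ^ (1 - u⁻¹) * T = T ^ u := by
    rw [CFC.rpow_rpow_of_exponent_nonneg T _ _ hu₀.le hu']
    nth_rewrite 2 [← CFC.rpow_one T]
    rw [← rpow_add_of_exponents_nonneg T (mul_nonneg hu₀.le hu') zero_le_one, mul_one_sub,
      mul_inv_cancel₀ hu₀.ne', sub_add_cancel]
  rw [smul_rpow hTu (inv_nonneg.2 hpos.le), Matrix.smul_mul, hpow, trace_smul, Complex.smul_re,
    smul_eq_mul, ← traceRpow, Real.inv_rpow hpos.le, Real.rpow_sub hpos, Real.rpow_one, inv_div,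
    div_mul_cancel₀ _ hpos.ne']

lemma isGreatest_re_trace_rpow_mul [Nonempty n] (hT : 0 ≤ T) (hu : 1 ≤ u) :
    IsGreatest ((fun C => (trace (C ^ (1 - u⁻¹) * T)).re) '' {C | IsDensity C})
      (traceRpow T u ^ u⁻¹) := by
  have hu₀ : 0 < u := zero_lt_one.trans_le hu
  refine ⟨?_, fun _ ⟨C, hC, hCeq⟩ => hCeq ▸ re_trace_rpow_mul_le hT hC hu⟩
  rcases (traceRpow_nonneg T u).eq_or_lt with hzero | hpos
  · obtain ⟨C, hC⟩ := nonempty_isDensity (n := n)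
    refine ⟨C, hC, ?_⟩
    simp only [← hzero, Real.zero_rpow (inv_ne_zero hu₀.ne')]
    rw [eq_zero_of_traceRpow_eq_zero hT hu₀ hzero.symm, mul_zero, trace_zero, Complex.zero_re]
  · have hTu : 0 ≤ T ^ u := CFC.rpow_nonneg
    exact ⟨_, isDensity_inv_re_trace_smul hTu hpos.ne',
      re_trace_rpow_mul_inv_traceRpow_smul hT hpos hu⟩

end DensityMatrices

section DensityOptimization

open scoped MatrixOrder Matrix.Norms.L2Operator

variable {ι m n : Type*} [Fintype ι] [Fintype m] (J : ι → Matrix m n ℂ)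

lemma trace_krausMap_mul_mul_mul [Fintype n] (D Y : Matrix m m ℂ) (V : Matrix n n ℂ) :
    trace (krausMap J (D * Y * D) * V) = trace (Y * (D * krausMap (fun i => (J i)ᴴ) V * D)) := by
  rw [trace_krausMap_mul, Matrix.mul_assoc D, Matrix.mul_assoc D, trace_mul_comm D]
  simp only [Matrix.mul_assoc]

variable [DecidableEq m]

lemma krausMap_rpow_mul_rpow_mul_rpow_nonneg [Finite n] (B C : Matrix m m ℂ) (x r : ℝ) :
    0 ≤ krausMap J (B ^ x * C ^ r * B ^ x) := by
  have hC : 0 ≤ C ^ r := CFC.rpow_nonneg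
  have h := krausMap_nonneg J (mul_mul_conjTranspose_nonneg hC (B ^ x))
  rwa [conjTranspose_rpow] at h

variable [Fintype n] [DecidableEq n] {q b u : ℝ}

lemma continuousOn_traceRpow_krausMap_mul_rpow_mul (B : Matrix m m ℂ) (x : ℝ) {r : ℝ} (hr : 0 ≤ r)
    (hb : 0 ≤ b) :
    ContinuousOn (fun C => traceRpow (krausMap J (B ^ x * C ^ r * B ^ x)) b) (Set.Ici 0) := by
  have hcont : ContinuousOn (fun C => krausMap J (B ^ x * C ^ r * B ^ x)) (Set.Ici 0) := by
    have h := continuousOn_rpow_Ici (n := m) hr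
    simp only [krausMap_apply]
    fun_prop
  exact (continuousOn_traceRpow hb).comp hcont
    fun C _ => krausMap_rpow_mul_rpow_mul_rpow_nonneg J B C x r

lemma concaveOn_traceRpow_rpow_inv_sub (hq : 0 < q) (hb : 1 ≤ b) (hu : 1 ≤ u)
    (hqbu : q + (1 - u⁻¹) ≤ b⁻¹) :
    ConcaveOn ℝ ({B | B.PosDef} ×ˢ Set.Ici 0) fun x : Matrix m m ℂ × Matrix n n ℂ =>
      traceRpow (x.1 ^ (q / 2) * krausMap (fun i => (J i)ᴴ) (x.2 ^ (1 - b⁻¹)) * x.1 ^ (q / 2)) u ^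
        u⁻¹ - (1 - b⁻¹) * (trace x.2).re := by
  have hu₀ : 0 ≤ u⁻¹ := inv_nonneg.2 (zero_le_one.trans hu)
  have hb' : 0 ≤ 1 - b⁻¹ := sub_nonneg.2 (inv_le_one_of_one_le₀ hb)
  have hinner := concaveOn_traceRpow_rpow_half_mul_krausMap_rpow_mul (fun i => (J i)ᴴ) hq hb' hu
    (by linarith)
  set f : Matrix m m ℂ × Matrix n n ℂ → ℝ := fun x =>
    traceRpow (x.1 ^ (q / 2) * krausMap (fun i => (J i)ᴴ) (x.2 ^ (1 - b⁻¹)) * x.1 ^ (q / 2)) u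
  have hf : ∀ x, 0 ≤ f x := fun x => traceRpow_nonneg _ _
  refine ConcaveOn.sub (f := fun x => f x ^ u⁻¹) ⟨hinner.1, fun x hx y hy k l hk hl hkl => ?_⟩
    ⟨hinner.1, fun x _ y _ k l _ _ _ => le_of_eq ?_⟩
  · refine ((Real.concaveOn_rpow hu₀ (inv_le_one_of_one_le₀ hu)).2 (hf x) (hf y) hk hl hkl).trans ?_
    exact Real.rpow_le_rpow (add_nonneg (smul_nonneg hk (hf x)) (smul_nonneg hl (hf y)))
      (hinner.2 hx hy hk hl hkl) hu₀
  · simp only [Prod.snd_add, Prod.smul_snd, trace_add, trace_smul, Complex.add_re,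
      Complex.smul_re, smul_eq_mul]
    ring

-- The suprema over `C` and over Young's variable `U` commute; once `C` has been maximized out by
-- Hölder's inequality, the remaining objective is jointly concave in `(B, U)`.
lemma concaveOn_sSup_traceRpow_krausMap [Nonempty m] (hq : 0 < q) (hb : 1 ≤ b) (hu : 1 ≤ u)
    (hqbu : q + (1 - u⁻¹) ≤ b⁻¹) :
    ConcaveOn ℝ {B : Matrix m m ℂ | B.PosDef} fun B =>
      sSup ((fun C => b⁻¹ * traceRpow (krausMap J (B ^ (q / 2) * C ^ (1 - u⁻¹) * B ^ (q / 2))) b) ''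
        {C | IsDensity C}) := by
  refine concaveOn_of_isGreatest (concaveOn_traceRpow_rpow_inv_sub J hq hb hu hqbu)
    (convex_posDef m) fun B _ => ?_
  refine isGreatest_image_comm (S := {C | IsDensity C})
    (h := fun C U => (trace (krausMap J (B ^ (q / 2) * C ^ (1 - u⁻¹) * B ^ (q / 2)) *
      U ^ (1 - b⁻¹))).re - (1 - b⁻¹) * (trace U).re) ?_ ?_ (isGreatest_sSup_image_isDensity ?_)
  · intro C _
    have hyoung := isGreatest_re_trace_mul_rpow_sub
      (krausMap_rpow_mul_rpow_mul_rpow_nonneg J B C (q / 2) (1 - u⁻¹)) hb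
    exact hyoung
  · intro U _
    have hU' : 0 ≤ U ^ (1 - b⁻¹) := CFC.rpow_nonneg
    have hnonneg := mul_mul_conjTranspose_nonneg (krausMap_nonneg (fun i => (J i)ᴴ) hU')
      (B ^ (q / 2))
    rw [conjTranspose_rpow] at hnonneg
    have hholder := (monotone_id.add_const (-((1 - b⁻¹) * (trace U).re))).map_isGreatest
      (isGreatest_re_trace_rpow_mul hnonneg hu)
    simpa only [trace_krausMap_mul_mul_mul, Set.image_image, id_eq, ← sub_eq_add_neg] using hholder
  · exact continuousOn_const.mul ((continuousOn_traceRpow_krausMap_mul_rpow_mul J B (q / 2)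
      (sub_nonneg.2 (inv_le_one_of_one_le₀ hu)) (zero_le_one.trans hb)).mono
        fun _ hC => IsDensity.nonneg hC)

end DensityOptimization

section Minimax

lemma isGLB_image_sSup_image {E F : Type*} [TopologicalSpace E] [AddCommGroup E] [Module ℝ E]
    [IsTopologicalAddGroup E] [ContinuousSMul ℝ E] [TopologicalSpace F] [AddCommGroup F]
    [Module ℝ F] [IsTopologicalAddGroup F] [ContinuousSMul ℝ F] {S : Set E} {T : Set F}
    {g : E → F → ℝ} {φ : E → ℝ} {γ : F → ℝ} (hSne : S.Nonempty) (hScompact : IsCompact S)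
    (hTne : T.Nonempty)
    (hcont_left : ∀ y ∈ T, ContinuousOn (fun x => g x y) S)
    (hconc : ∀ y ∈ T, ConcaveOn ℝ S fun x => g x y)
    (hcont_right : ∀ x ∈ S, ContinuousOn (g x) T) (hconv : ∀ x ∈ S, ConvexOn ℝ T (g x))
    (hφ : ∀ x ∈ S, IsGLB (g x '' T) (φ x)) (hγ : ∀ y ∈ T, IsLUB ((fun x => g x y) '' S) (γ y)) :
    IsGLB (γ '' T) (sSup (φ '' S)) := by
  obtain ⟨x₀, hx₀⟩ := hSne
  obtain ⟨y₀, hy₀⟩ := hTne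
  have hle : ∀ x ∈ S, ∀ y ∈ T, φ x ≤ γ y := fun x hx y hy =>
    ((hφ x hx).1 ⟨y, hy, rfl⟩).trans ((hγ y hy).1 ⟨x, hx, rfl⟩)
  have hsup : IsLUB (φ '' S) (sSup (φ '' S)) := isLUB_csSup ⟨_, x₀, hx₀, rfl⟩
    ⟨γ y₀, Set.forall_mem_image.2 fun x hx => hle x hx y₀ hy₀⟩
  have hinf : IsGLB (γ '' T) (sInf (γ '' T)) := isGLB_csInf ⟨_, y₀, hy₀, rfl⟩
    ⟨φ x₀, Set.forall_mem_image.2 fun y hy => hle x₀ hx₀ y hy⟩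
  have hminimax : sSup (φ '' S) = sInf (γ '' T) :=
    Sion.minimax (β := ℝᵒᵈ) (f := fun x y => OrderDual.toDual (g x y)) ⟨x₀, hx₀⟩ hScompact
      (fun y hy => (hcont_left y hy).upperSemicontinuousOn)
      (fun y hy => (hconc y hy).quasiconcaveOn.dual) (hconv x₀ hx₀).1
      (fun x hx => (hcont_right x hx).lowerSemicontinuousOn)
      (fun x hx => (hconv x hx).quasiconvexOn.dual) (hconc y₀ hy₀).1
      φ hφ _ hsup γ hγ _ hinf
  rwa [hminimax]

end Minimax

section HolderFormMinimax

open scoped MatrixOrder Matrix.Norms.L2Operator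

variable {n : Type*} [Fintype n]

lemma convexOn_conj {E : Type*} [AddCommGroup E] [Module ℝ E] {S : Set E}
    {f : E → Matrix n n ℂ} (hf : ConvexOn ℝ S f) (X : Matrix n n ℂ) :
    ConvexOn ℝ S fun x => X * f x * Xᴴ := by
  refine ⟨hf.1, fun x hx y hy k l hk hl hkl => ?_⟩
  have h := mul_mul_conjTranspose_nonneg (sub_nonneg.2 (hf.2 hx hy hk hl hkl)) X
  rw [Matrix.mul_sub, Matrix.sub_mul, sub_nonneg] at h
  simpa only [Matrix.mul_add, Matrix.add_mul, Matrix.mul_smul, Matrix.smul_mul] using h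

variable [DecidableEq n] {M : Matrix n n ℂ} {a b : ℝ}

lemma convexOn_traceRpow_comp {E : Type*} [AddCommGroup E] [Module ℝ E] {S : Set E}
    {f : E → Matrix n n ℂ} (hf : ConvexOn ℝ S f) (hf₀ : ∀ x ∈ S, 0 ≤ f x) (hb : 1 ≤ b) :
    ConvexOn ℝ S fun x => traceRpow (f x) b := by
  refine ⟨hf.1, fun x hx y hy k l hk hl hkl => ?_⟩
  have hmono := traceRpow_le_traceRpow (hf₀ _ (hf.1 hx hy hk hl hkl)) (hf.2 hx hy hk hl hkl) hb
  exact hmono.trans ((convexOn_traceRpow hb).2 (hf₀ x hx) (hf₀ y hy) hk hl hkl)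

lemma convexOn_matrix_inv : ConvexOn ℝ {P : Matrix n n ℂ | P.PosDef} fun P => P⁻¹ := by
  simp only [nonsing_inv_eq_ringInverse, ← isStrictlyPositive_iff_posDef]
  exact CStarAlgebra.convexOn_ringInverse

lemma convexOn_holderForm (hM : 0 ≤ M) (ha : 1 ≤ a) (hb : 1 ≤ b) (X : Matrix n n ℂ) :
    ConvexOn ℝ {P | P.PosDef} (holderForm a b X M) := by
  have hfst := convexOn_conj (convexOn_id (convex_posDef n)) X
  have hsnd := convexOn_conj convexOn_matrix_inv (M ^ (1 / 2 : ℝ))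
  have hfst' := convexOn_traceRpow_comp hfst (fun P hP => mul_mul_conjTranspose_nonneg
    (nonneg_iff_posSemidef.2 hP.posSemidef) X) ha
  have hsnd' := convexOn_traceRpow_comp hsnd (fun P hP => mul_mul_conjTranspose_nonneg
    (nonneg_iff_posSemidef.2 hP.inv.posSemidef) _) hb
  refine ((hfst'.smul (inv_nonneg.2 (zero_le_one.trans ha))).add
    (hsnd'.smul (inv_nonneg.2 (zero_le_one.trans hb)))).congr fun P hP => ?_
  simp only [holderForm, traceRpow_rpow_neg_half_mul_mul hM hP, conjTranspose_rpow, id_eq,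
    Pi.add_apply, smul_eq_mul]

lemma continuousOn_holderForm (hM : 0 ≤ M) (ha : 0 ≤ a) (hb : 0 ≤ b) (X : Matrix n n ℂ) :
    ContinuousOn (holderForm a b X M) {P | P.PosDef} := by
  have hpow : ContinuousOn (fun P : Matrix n n ℂ => P ^ (-(1 / 2) : ℝ)) {P | P.PosDef} := by
    simp only [← isStrictlyPositive_iff_posDef]
    exact CFC.continuousOn_rpow _
  have hfst : ContinuousOn (fun P => traceRpow (X * P * Xᴴ) a) {P | P.PosDef} :=
    (continuousOn_traceRpow ha).comp (by fun_prop) fun P hP =>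
      mul_mul_conjTranspose_nonneg (nonneg_iff_posSemidef.2 hP.posSemidef) X
  have hsnd : ContinuousOn
      (fun P => traceRpow (P ^ (-(1 / 2) : ℝ) * M * P ^ (-(1 / 2) : ℝ)) b) {P | P.PosDef} :=
    (continuousOn_traceRpow hb).comp (by fun_prop) fun P _ => by
      have h := mul_mul_conjTranspose_nonneg hM (P ^ (-(1 / 2) : ℝ))
      rwa [conjTranspose_rpow] at h
  exact (hfst.const_mul a⁻¹).add (hsnd.const_mul b⁻¹)

variable {ι m : Type*} [Fintype ι] [Fintype m] [DecidableEq m] (J : ι → Matrix m n ℂ)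
  {r s : ℝ}

lemma concaveOn_holderForm_krausMap (hr : 0 ≤ r) (hb : 1 ≤ b) (hrb : r ≤ b⁻¹) (x : ℝ)
    (B : Matrix m m ℂ) (X P : Matrix n n ℂ) :
    ConcaveOn ℝ (Set.Ici 0) fun C =>
      holderForm a b X (krausMap J (B ^ x * C ^ r * B ^ x)) P := by
  have hepstein := concaveOn_traceRpow_krausMap_rpow
    (fun i => B ^ x * (J i * P ^ (-(1 / 2) : ℝ))) hr hb hrb
  refine ((concaveOn_const (a⁻¹ * traceRpow (X * P * Xᴴ) a) (convex_Ici 0)).add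
    (hepstein.smul (inv_nonneg.2 (zero_le_one.trans hb)))).congr fun C _ => ?_
  have hconj := krausMap_conjTranspose_mul_mul (fun i => J i * P ^ (-(1 / 2) : ℝ)) (C ^ r) (B ^ x)
  rw [conjTranspose_rpow] at hconj
  simp only [holderForm_krausMap, hconj, Pi.add_apply, smul_eq_mul]

lemma isGLB_sSup_holderForm [Nonempty m] {X : Matrix n n ℂ} (hX : IsUnit X)
    (habs : a.HolderTriple b s) (ha : 1 ≤ a) (hb : 1 ≤ b) (hr : 0 ≤ r) (hrb : r ≤ b⁻¹)
    (x : ℝ) (B : Matrix m m ℂ) :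
    IsGLB ((fun P => a⁻¹ * traceRpow (X * P * Xᴴ) a + sSup ((fun C => b⁻¹ * traceRpow
        (krausMap (fun i => J i * P ^ (-(1 / 2) : ℝ)) (B ^ x * C ^ r * B ^ x)) b) ''
          {C | IsDensity C})) '' {P | P.PosDef})
      (sSup ((fun C => s⁻¹ * traceRpow (X * krausMap J (B ^ x * C ^ r * B ^ x) * Xᴴ) s) ''
        {C | IsDensity C})) := by
  have hb₀ : 0 ≤ b := zero_le_one.trans hb
  have hsub : {C : Matrix m m ℂ | IsDensity C} ⊆ Set.Ici 0 := fun C hC => IsDensity.nonneg hC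
  have hcont : ∀ P : Matrix n n ℂ, ContinuousOn (fun C => b⁻¹ * traceRpow
      (krausMap (fun i => J i * P ^ (-(1 / 2) : ℝ)) (B ^ x * C ^ r * B ^ x)) b)
      {C | IsDensity C} := fun P =>
    ((continuousOn_traceRpow_krausMap_mul_rpow_mul _ B x hr hb₀).mono hsub).const_mul _
  refine isGLB_image_sSup_image
    (g := fun C => holderForm a b X (krausMap J (B ^ x * C ^ r * B ^ x)))
    nonempty_isDensity isCompact_isDensity ⟨1, PosDef.one⟩ (fun P _ => ?_)
    (fun P _ => (concaveOn_holderForm_krausMap J hr hb hrb x B X P).subset hsub convex_isDensity)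
    (fun C _ => continuousOn_holderForm (krausMap_rpow_mul_rpow_mul_rpow_nonneg J B C x r)
      (zero_le_one.trans ha) hb₀ X)
    (fun C _ => convexOn_holderForm (krausMap_rpow_mul_rpow_mul_rpow_nonneg J B C x r) ha hb X)
    (fun C _ => isGLB_holderForm habs ha hb hX (krausMap_rpow_mul_rpow_mul_rpow_nonneg J B C x r))
    fun P _ => ?_
  · simp only [holderForm_krausMap]
    exact (hcont P).const_add _
  · have hmax := (monotone_id.const_add (a⁻¹ * traceRpow (X * P * Xᴴ) a)).map_isGreatest
      (isGreatest_sSup_image_isDensity (hcont P))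
    simpa only [holderForm_krausMap, Set.image_image, id_eq] using hmax.isLUB

end HolderFormMinimax

section OptimizedTraceFunctional

open scoped MatrixOrder Matrix.Norms.L2Operator

variable {ι m n : Type*} [Fintype ι] [Fintype m] [DecidableEq m] [Fintype n] [DecidableEq n]
  (J : ι → Matrix m n ℂ) {a b p q r s : ℝ} {K : Matrix n n ℂ}

/-- The supremum over density matrices `C` of
`Tr (A^(p/2) K Φ(B^(q/2) C^r B^(q/2)) Kᴴ A^(p/2))^s`, where `Φ` is the Kraus map of `J`. The
functional `Qsup` is the case where `Φ` tensors with the identity. -/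
noncomputable def optimizedTraceRpow (K : Matrix n n ℂ) (p q r s : ℝ) (A : Matrix n n ℂ)
    (B : Matrix m m ℂ) : ℝ :=
  sSup ((fun C => traceRpow
    (A ^ (p / 2) * K * krausMap J (B ^ (q / 2) * C ^ r * B ^ (q / 2)) * (A ^ (p / 2) * K)ᴴ) s) ''
      {C | IsDensity C})

lemma inv_mul_optimizedTraceRpow (hs : 0 ≤ s) (A : Matrix n n ℂ) (B : Matrix m m ℂ) :
    s⁻¹ * optimizedTraceRpow J K p q r s A B = sSup ((fun C => s⁻¹ * traceRpow
      (A ^ (p / 2) * K * krausMap J (B ^ (q / 2) * C ^ r * B ^ (q / 2)) * (A ^ (p / 2) * K)ᴴ) s) ''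
        {C | IsDensity C}) := by
  rw [optimizedTraceRpow, ← smul_eq_mul, ← Real.sSup_smul_of_nonneg (inv_nonneg.2 hs),
    ← Set.image_smul, Set.image_image]
  rfl

lemma concaveOn_traceRpow_add_sSup [Nonempty m] (hp : 0 ≤ p) (hq : 0 < q) (hr : 0 ≤ r)
    (ha : 1 ≤ a) (hb : 1 ≤ b) (hpa : p ≤ a⁻¹) (hqrb : q + r ≤ b⁻¹) (K : Matrix n n ℂ)
    {P : Matrix n n ℂ} (hP : P.PosDef) :
    ConcaveOn ℝ ({A : Matrix n n ℂ | A.PosDef} ×ˢ {B : Matrix m m ℂ | B.PosDef}) fun z =>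
      a⁻¹ * traceRpow (z.1 ^ (p / 2) * K * P * (z.1 ^ (p / 2) * K)ᴴ) a +
        sSup ((fun C => b⁻¹ * traceRpow (krausMap (fun i => J i * P ^ (-(1 / 2) : ℝ))
          (z.2 ^ (q / 2) * C ^ r * z.2 ^ (q / 2))) b) '' {C | IsDensity C}) := by
  have hr1 : r < 1 := by linarith [inv_le_one_of_one_le₀ hb]
  have hfst := (concaveOn_traceRpow_rpow_half_mul_mul (mul_mul_conjTranspose_nonneg
    (nonneg_iff_posSemidef.2 hP.posSemidef) K) hp ha hpa).subset
      (fun A (hA : A.PosDef) => nonneg_iff_posSemidef.2 hA.posSemidef) (convex_posDef n)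
  have hsnd := concaveOn_sSup_traceRpow_krausMap (fun i => J i * P ^ (-(1 / 2) : ℝ))
    (u := (1 - r)⁻¹) hq hb (one_le_inv_iff₀.2 ⟨by linarith, by linarith⟩)
    (by rwa [inv_inv, sub_sub_cancel])
  have hconvex := (convex_posDef n).prod (convex_posDef m)
  have hfst' := ((hfst.comp_linearMap (LinearMap.fst ℝ _ (Matrix m m ℂ))).subset
    (fun z hz => hz.1) hconvex).smul (inv_nonneg.2 (zero_le_one.trans ha))
  have hsnd' := (hsnd.comp_linearMap (LinearMap.snd ℝ (Matrix n n ℂ) _)).subset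
    (fun z hz => hz.2) hconvex
  refine (hfst'.add hsnd').congr fun z _ => ?_
  simp only [Pi.add_apply, Function.comp_apply, LinearMap.fst_apply, LinearMap.snd_apply, inv_inv,
    sub_sub_cancel, smul_eq_mul, conjTranspose_mul, conjTranspose_rpow, Matrix.mul_assoc]

lemma concaveOn_optimizedTraceRpow [Nonempty m] (hK : IsUnit K) (hp : 0 ≤ p) (hq : 0 < q)
    (hr : 0 ≤ r) (ha : 1 ≤ a) (hb : 1 ≤ b) (hpa : p ≤ a⁻¹) (hqrb : q + r ≤ b⁻¹)
    (habs : a.HolderTriple b s) :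
    ConcaveOn ℝ ({A : Matrix n n ℂ | A.PosDef} ×ˢ {B : Matrix m m ℂ | B.PosDef}) fun z =>
      optimizedTraceRpow J K p q r s z.1 z.2 := by
  have hs : 0 < s := habs.pos'
  have hconvex := (convex_posDef n).prod (convex_posDef m)
  have hconcave := concaveOn_of_isGLB (T := {P : Matrix n n ℂ | P.PosDef})
    (fun P hP => concaveOn_traceRpow_add_sSup J hp hq hr ha hb hpa hqrb K hP) hconvex
    fun z hz => isGLB_sSup_holderForm J ((isUnit_rpow hz.1 (p / 2)).mul hK) habs ha hb hr
      (by linarith) (q / 2) z.2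
  refine (hconcave.smul hs.le).congr fun z _ => ?_
  have hscale := inv_mul_optimizedTraceRpow J (K := K) (p := p) (q := q) (r := r) hs.le z.1 z.2
  simp only [← hscale, smul_eq_mul, mul_inv_cancel_left₀ hs.ne']

end OptimizedTraceFunctional

section HolderExponents

variable {p q s : ℝ}

lemma exists_holderTriple (hp : 0 < p) (hq : 0 < q) (hps : p / (p + q) ≤ s)
    (hqs : q / (p + q) ≤ s) (hs : s ≤ 1 / (p + q)) :
    ∃ a b : ℝ, a.HolderTriple b s ∧ 1 ≤ a ∧ 1 ≤ b ∧ p ≤ a⁻¹ ∧ q ≤ b⁻¹ := by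
  have hpq : 0 < p + q := by positivity
  have hs₀ : 0 < s := hps.trans_lt' (by positivity)
  rw [div_le_iff₀ hpq] at hps hqs
  rw [le_div_iff₀ hpq] at hs
  refine ⟨s * (p + q) / p, s * (p + q) / q, ⟨?_, by positivity, by positivity⟩,
    (one_le_div₀ hp).2 hps, (one_le_div₀ hq).2 hqs, ?_, ?_⟩
  · field_simp
  · rw [inv_div]
    exact le_div_self hp.le (by positivity) hs
  · rw [inv_div]
    exact le_div_self hq.le (by positivity) hs

end HolderExponents

section TensorFactor

open scoped MatrixOrder Matrix.Norms.L2Operator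

lemma matPow_eq_rpow {n : Type*} [Fintype n] [DecidableEq n] {A : Matrix n n ℂ} (hA : 0 ≤ A)
    {x : ℝ} (hx : 0 < x) : matPow A x = A ^ x := by
  have hA' := nonneg_iff_posSemidef.1 hA
  rw [matPow, dif_pos hA'.1, CFC.rpow_eq_cfc_real hA, hA'.1.cfc_eq, IsHermitian.cfc,
    Unitary.conjStarAlgAut_apply]
  congr 3
  ext i
  split_ifs with hpos
  · rfl
  · have hzero : hA'.1.eigenvalues i = 0 := (not_lt.1 hpos).antisymm (hA'.eigenvalues_nonneg i)
    simp [hzero, Real.zero_rpow hx.ne']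

variable {n₁ n₂ : Type*} [Fintype n₁] [DecidableEq n₁] [Fintype n₂] [DecidableEq n₂]

/-- The coisometry `⟨i| ⊗ 1` from `ℂ^n₁ ⊗ ℂ^n₂` onto the `i`-th copy of `ℂ^n₂`. These are the Kraus
operators of `Y ↦ 1 ⊗ Y`. -/
def blockProj (n₂ : Type*) [DecidableEq n₂] (i : n₁) : Matrix n₂ (n₁ × n₂) ℂ :=
  (1 : Matrix (n₁ × n₂) (n₁ × n₂) ℂ).submatrix (Prod.mk i) id

lemma krausMap_blockProj (Y : Matrix n₂ n₂ ℂ) :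
    krausMap (blockProj n₂) Y = (1 : Matrix n₁ n₁ ℂ) ⊗ₖ Y := by
  ext ⟨i, j⟩ ⟨i', j'⟩
  simp [krausMap_apply, blockProj, Matrix.sum_apply, Matrix.mul_apply, one_apply, Prod.ext_iff,
    ite_and, eq_comm]

lemma Qsup_eq_optimizedTraceRpow {K A : Matrix (n₁ × n₂) (n₁ × n₂) ℂ} {B : Matrix n₂ n₂ ℂ}
    {p q r s : ℝ} (hA : A.PosDef) (hB : B.PosDef) (hp : 0 < p) (hq : 0 < q) (hr : 0 < r)
    (hs : 0 < s) :
    Qsup K p q r s A B = optimizedTraceRpow (blockProj n₂) K p q r s A B := by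
  have hterm : ∀ C : Matrix n₂ n₂ ℂ, IsDensity C →
      (trace (matPow (matPow A (p / 2) * K *
        ((1 : Matrix n₁ n₁ ℂ) ⊗ₖ (matPow B (q / 2) * matPow C r * matPow B (q / 2))) *
          Kᴴ * matPow A (p / 2)) s)).re =
      traceRpow (A ^ (p / 2) * K * krausMap (blockProj n₂) (B ^ (q / 2) * C ^ r * B ^ (q / 2)) *
        (A ^ (p / 2) * K)ᴴ) s := fun C hC => by
    have hnonneg := mul_mul_conjTranspose_nonneg
      (krausMap_rpow_mul_rpow_mul_rpow_nonneg (blockProj (n₁ := n₁) n₂) B C (q / 2) r)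
      (A ^ (p / 2) * K)
    rw [traceRpow, ← matPow_eq_rpow hnonneg hs,
      matPow_eq_rpow (nonneg_iff_posSemidef.2 hA.posSemidef) (half_pos hp),
      matPow_eq_rpow (nonneg_iff_posSemidef.2 hB.posSemidef) (half_pos hq),
      matPow_eq_rpow (IsDensity.nonneg hC) hr, krausMap_blockProj, conjTranspose_mul,
      conjTranspose_rpow]
    simp only [Matrix.mul_assoc]
  rw [Qsup, optimizedTraceRpow]
  congr 1
  ext x
  exact exists_congr fun C => and_congr_right fun hC => by rw [hterm C hC, eq_comm]

lemma Qsup_of_isEmpty [IsEmpty n₂] (K A : Matrix (n₁ × n₂) (n₁ × n₂) ℂ) (B : Matrix n₂ n₂ ℂ)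
    (p q r s : ℝ) : Qsup K p q r s A B = 0 := by
  have hnone : ∀ C : Matrix n₂ n₂ ℂ, ¬ IsDensity C := fun C hC => by simpa [trace] using hC.2
  simp [Qsup, hnone]

end TensorFactor

/-- joint concavity of `(A,B) ↦ Q(A,B)` for
`0 < p,q,r ≤ 1` and `p/(p+q+r), (q+r)/(p+q+r) ≤ s ≤ 1/(p+q+r)`. -/
theorem stmt0 {n₁ n₂ : Type*} [Fintype n₁] [DecidableEq n₁]
    [Fintype n₂] [DecidableEq n₂]
    (K : Matrix (n₁ × n₂) (n₁ × n₂) ℂ) (hK : IsUnit K)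
    (p q r s : ℝ) (hp0 : 0 < p) (hp1 : p ≤ 1) (hq0 : 0 < q) (hq1 : q ≤ 1)
    (hr0 : 0 < r) (hr1 : r ≤ 1)
    (hs1 : p / (p + q + r) ≤ s) (hs2 : (q + r) / (p + q + r) ≤ s)
    (hs3 : s ≤ 1 / (p + q + r))
    (A₀ A₁ : Matrix (n₁ × n₂) (n₁ × n₂) ℂ) (hA₀ : A₀.PosDef) (hA₁ : A₁.PosDef)
    (B₀ B₁ : Matrix n₂ n₂ ℂ) (hB₀ : B₀.PosDef) (hB₁ : B₁.PosDef)
    (t : ℝ) (ht0 : 0 ≤ t) (ht1 : t ≤ 1) :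
    Qsup K p q r s ((t : ℂ) • A₀ + ((1 - t : ℝ) : ℂ) • A₁)
        ((t : ℂ) • B₀ + ((1 - t : ℝ) : ℂ) • B₁) ≥
      t * Qsup K p q r s A₀ B₀ + (1 - t) * Qsup K p q r s A₁ B₁ := by
  rcases isEmpty_or_nonempty n₂ with hempty | hne
  · simp only [Qsup_of_isEmpty, mul_zero, add_zero, ge_iff_le, le_refl]
  simp only [add_assoc p q r] at hs1 hs2 hs3
  obtain ⟨a, b, habs, ha, hb, hpa, hqrb⟩ := exists_holderTriple hp0 (by positivity) hs1 hs2 hs3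
  have hs : 0 < s := habs.pos'
  have ht1' : 0 ≤ 1 - t := sub_nonneg.2 ht1
  have hconcave := (concaveOn_optimizedTraceRpow (blockProj n₂) hK hp0.le hq0 hr0.le ha hb hpa
    hqrb habs).2 (x := (A₀, B₀)) ⟨hA₀, hB₀⟩ (y := (A₁, B₁)) ⟨hA₁, hB₁⟩ ht0 ht1' (by ring)
  have hA := convex_posDef _ hA₀ hA₁ ht0 ht1' (by ring)
  have hB := convex_posDef _ hB₀ hB₁ ht0 ht1' (by ring)
  rw [Complex.coe_smul, Complex.coe_smul, Complex.coe_smul, Complex.coe_smul,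
    Qsup_eq_optimizedTraceRpow hA hB hp0 hq0 hr0 hs,
    Qsup_eq_optimizedTraceRpow hA₀ hB₀ hp0 hq0 hr0 hs,
    Qsup_eq_optimizedTraceRpow hA₁ hB₁ hp0 hq0 hr0 hs]
  exact hconcave
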